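/- arXiv:2111.02615 — 7 statements merged into one kernel-verified Lean document; each statement's English description precedes it below -/
import Mathlib

section
/- Let Γ be a finite connected simple graph with at least 3 vertices, and let g be an automorphism of Γ such that the cyclic group generated by g acts regularly (transitively and freely) on the edge set of Γ. Then either there exists n ≥ 3 such that Γ is isomorphic to the cycle graph C_n, or there exist s, t ≥ 1 with s·t > 1 and Nat.gcd s t = 1 such that Γ is isomorphic to the complete bipartite graph with parts Fin s and Fin t. -/
/-- The cycle graph `C_n` on `ZMod n`: `i` and `j` are adjacent iff `j = i + 1` or `i = j + 1`. -/
def cycGraph (n : ℕ) : SimpleGraph (ZMod n) :=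
  SimpleGraph.fromRel (fun i j => j = i + 1)

/-!
Fix an edge `{u, v}`; every edge is a translate `{g ^ k u, g ^ k v}`. If `v = g ^ a u`, then all
vertices lie in one orbit and the neighbours of `x` are `h x` and `h⁻¹ x` with `h = g ^ a`; by
connectedness `h` is transitive on vertices, so the graph is a cycle. Otherwise the orbits of `u`
and `v` are disjoint copies of `ZMod s` and `ZMod t`, and the edges join `k mod s` to `k mod t` for
`k : ℤ`. The residue modulo `gcd s t` is constant along edges, so connectedness makes `s` and `t`
coprime, and the Chinese remainder theorem then provides every edge between the two parts.
-/

open Function SimpleGraph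

theorem exists_injective_zmod_eq_zpow_smul {G α : Type*} [Group G] [MulAction G α] (g : G) (a : α) :
    ∃ (n : ℕ) (f : ZMod n → α), Injective f ∧ ∀ k : ℤ, f k = g ^ k • a := by
  let e := (MulAction.orbitZPowersEquiv g a).symm
  refine ⟨_, fun k => (e k : α), Subtype.val_injective.comp e.injective, fun k => ?_⟩
  exact congrArg Subtype.val (MulAction.orbitZPowersEquiv_symm_apply' g a k)

theorem exists_intCast_eq_and_intCast_eq {s t : ℕ} (h : s.Coprime t) (i : ZMod s) (j : ZMod t) :
    ∃ k : ℤ, (k : ZMod s) = i ∧ (k : ZMod t) = j := by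
  let e := ZMod.chineseRemainder h
  obtain ⟨k, hk⟩ := ZMod.intCast_surjective (e.symm (i, j))
  have hij : (k : ZMod s × ZMod t) = (i, j) := by
    rw [← map_intCast e, hk, e.apply_symm_apply]
  exact ⟨k, congrArg Prod.fst hij, congrArg Prod.snd hij⟩

section Graph

variable {V G : Type*} {Γ : SimpleGraph V} [Group G] [MulAction G V]

theorem preconnected_induction (hconn : Γ.Preconnected) {p : V → Prop} {u : V} (hu : p u)
    (hadj : ∀ x y, Γ.Adj x y → p x → p y) (x : V) : p x := by
  obtain ⟨w⟩ := hconn u x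
  induction w with
  | nil => exact hu
  | cons h _ ih => exact ih (hadj _ _ h hu)

theorem exists_zpow_smul_eq_or_eq [Nontrivial V] (hconn : Γ.Preconnected) {g : G} {u v : V}
    (hΓ : Γ.edgeSet = Set.range fun k : ℤ => s(g ^ k • u, g ^ k • v)) (x : V) :
    ∃ k : ℤ, g ^ k • u = x ∨ g ^ k • v = x := by
  obtain ⟨y, hxy⟩ := hconn.exists_adj_of_nontrivial x
  rw [← mem_edgeSet, hΓ] at hxy
  obtain ⟨k, hk⟩ := hxy
  rcases Sym2.eq_iff.1 hk with ⟨hx, -⟩ | ⟨-, hx⟩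
  · exact ⟨k, Or.inl hx⟩
  · exact ⟨k, Or.inr hx⟩

theorem exists_iso_cycGraph_of_adj_iff (hconn : Γ.Connected) (h : G)
    (hadj : ∀ x y, Γ.Adj x y ↔ y = h • x ∨ x = h • y) :
    ∃ n : ℕ, Nonempty (Γ ≃g cycGraph n) := by
  obtain ⟨u⟩ := hconn.nonempty
  obtain ⟨n, f, hf, hfk⟩ := exists_injective_zmod_eq_zpow_smul h u
  have hsucc : ∀ i, f (i + 1) = h • f i := by
    intro i
    obtain ⟨k, rfl⟩ := ZMod.intCast_surjective i
    rw [hfk, smul_smul, ← zpow_one_add, add_comm, ← hfk, Int.cast_add, Int.cast_one]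
  have hsurj : Surjective f := by
    refine preconnected_induction hconn.preconnected ⟨0, by simpa using hfk 0⟩ ?_
    rintro _ y hxy ⟨i, rfl⟩
    rcases (hadj _ _).1 hxy with rfl | hy
    · exact ⟨i + 1, hsucc i⟩
    · refine ⟨i - 1, smul_left_cancel h ?_⟩
      rw [← hsucc, sub_add_cancel, hy]
  have hiff : ∀ i j, Γ.Adj (f i) (f j) ↔ (cycGraph n).Adj i j := by
    intro i j
    have hadj' : Γ.Adj (f i) (f j) ↔ j = i + 1 ∨ i = j + 1 := by
      rw [hadj, ← hsucc, ← hsucc, hf.eq_iff, hf.eq_iff]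
    rw [cycGraph, fromRel_adj, ← hadj', iff_and_self]
    exact fun hij => ne_of_apply_ne f hij.ne
  exact ⟨n, ⟨RelIso.symm ⟨Equiv.ofBijective f ⟨hf, hsurj⟩, hiff _ _⟩⟩⟩

theorem exists_iso_cycGraph_of_edgeSet_eq_range [Nontrivial V] (hconn : Γ.Connected) {g : G}
    {u : V} {a : ℤ} (hΓ : Γ.edgeSet = Set.range fun k : ℤ => s(g ^ k • u, g ^ k • g ^ a • u)) :
    ∃ n : ℕ, Nonempty (Γ ≃g cycGraph n) := by
  have hcomm : ∀ k : ℤ, g ^ k • g ^ a • u = g ^ a • g ^ k • u := fun k => by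
    rw [smul_smul, smul_smul, zpow_mul_comm]
  have hsurj : ∀ x, ∃ k : ℤ, g ^ k • u = x := by
    intro x
    obtain ⟨k, hk | hk⟩ := exists_zpow_smul_eq_or_eq hconn.preconnected hΓ x
    · exact ⟨k, hk⟩
    · exact ⟨k + a, by rw [zpow_add, mul_smul, hk]⟩
  refine exists_iso_cycGraph_of_adj_iff hconn (g ^ a) fun x y => ?_
  rw [← mem_edgeSet, hΓ]
  simp only [hcomm, Set.mem_range, Sym2.eq_iff]
  constructor
  · rintro ⟨k, ⟨rfl, rfl⟩ | ⟨rfl, rfl⟩⟩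
    · exact Or.inl rfl
    · exact Or.inr rfl
  · rintro (rfl | rfl)
    · obtain ⟨k, rfl⟩ := hsurj x
      exact ⟨k, Or.inl ⟨rfl, rfl⟩⟩
    · obtain ⟨k, rfl⟩ := hsurj y
      exact ⟨k, Or.inr ⟨rfl, rfl⟩⟩

/-- The bipartite graph on `ZMod s ⊕ ZMod t` that has, for each integer `k`, an edge joining the
residues of `k` modulo `s` and modulo `t`. It is the model for a graph whose edges form a single
orbit of a cyclic group that does not fuse the two ends of an edge; the modulus `0` stands for an
infinite vertex orbit. -/
def residueGraph (s t : ℕ) : SimpleGraph (ZMod s ⊕ ZMod t) :=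
  fromEdgeSet (Set.range fun k : ℤ => s(Sum.inl (k : ZMod s), Sum.inr (k : ZMod t)))

theorem residueGraph_adj {s t : ℕ} {x y : ZMod s ⊕ ZMod t} :
    (residueGraph s t).Adj x y ↔
      ∃ k : ℤ, s(Sum.inl (k : ZMod s), Sum.inr (k : ZMod t)) = s(x, y) := by
  rw [residueGraph, fromEdgeSet_adj, Set.mem_range, and_iff_left_iff_imp]
  rintro ⟨k, hk⟩ rfl
  rcases Sym2.eq_iff.1 hk with ⟨hl, hr⟩ | ⟨hl, hr⟩ <;> exact Sum.inl_ne_inr (hl.trans hr.symm)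

theorem coprime_of_preconnected_residueGraph {s t : ℕ} (hconn : (residueGraph s t).Preconnected) :
    s.Coprime t := by
  let c : ZMod s ⊕ ZMod t → ZMod (s.gcd t) :=
    Sum.elim (ZMod.castHom (s.gcd_dvd_left t) _) (ZMod.castHom (s.gcd_dvd_right t) _)
  have hc : ∀ x y, (residueGraph s t).Adj x y → c x = 0 → c y = 0 := by
    intro x y hxy hx
    obtain ⟨k, hk⟩ := residueGraph_adj.1 hxy
    rcases Sym2.eq_iff.1 hk with ⟨rfl, rfl⟩ | ⟨rfl, rfl⟩ <;> simpa [c] using hx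
  have h1 : c (Sum.inl 1) = 0 :=
    preconnected_induction hconn (u := Sum.inl 0) (by simp [c]) hc _
  exact ZMod.one_eq_zero_iff.1 ((map_one _).symm.trans h1)

theorem residueGraph_eq_completeBipartiteGraph {s t : ℕ} (h : s.Coprime t) :
    residueGraph s t = completeBipartiteGraph (ZMod s) (ZMod t) := by
  ext (i | i) (j | j) <;>
    simp [residueGraph_adj, exists_intCast_eq_and_intCast_eq h]

theorem exists_iso_residueGraph [Nontrivial V] (hconn : Γ.Preconnected) {g : G} {u v : V}
    (hΓ : Γ.edgeSet = Set.range fun k : ℤ => s(g ^ k • u, g ^ k • v))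
    (hne : ∀ k : ℤ, g ^ k • u ≠ v) :
    ∃ s t : ℕ, Nonempty (Γ ≃g residueGraph s t) := by
  obtain ⟨s, fu, hfu, hfuk⟩ := exists_injective_zmod_eq_zpow_smul g u
  obtain ⟨t, fv, hfv, hfvk⟩ := exists_injective_zmod_eq_zpow_smul g v
  have hdisj : ∀ i j, fu i ≠ fv j := by
    intro i j hij
    obtain ⟨k, rfl⟩ := ZMod.intCast_surjective i
    obtain ⟨l, rfl⟩ := ZMod.intCast_surjective j
    refine hne (-l + k) ?_
    rw [zpow_add, mul_smul, ← hfuk, hij, hfvk, zpow_neg, inv_smul_smul]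
  let F : ZMod s ⊕ ZMod t → V := Sum.elim fu fv
  have hinj : Injective F := hfu.sumElim hfv hdisj
  have hsurj : Surjective F := by
    intro x
    obtain ⟨k, rfl | rfl⟩ := exists_zpow_smul_eq_or_eq hconn hΓ x
    · exact ⟨Sum.inl k, hfuk k⟩
    · exact ⟨Sum.inr k, hfvk k⟩
  have hiff : ∀ x y, Γ.Adj (F x) (F y) ↔ (residueGraph s t).Adj x y := by
    intro x y
    have hedge : ∀ k : ℤ, s(g ^ k • u, g ^ k • v) = Sym2.map F s(Sum.inl k, Sum.inr k) := by
      intro k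
      rw [← hfuk, ← hfvk]
      rfl
    rw [← mem_edgeSet, hΓ, residueGraph_adj, ← Sym2.map_mk]
    simp only [Set.mem_range, hedge, (Sym2.map.injective hinj).eq_iff]
  exact ⟨s, t, ⟨RelIso.symm ⟨Equiv.ofBijective F ⟨hinj, hsurj⟩, hiff _ _⟩⟩⟩

theorem three_le_of_iso_cycGraph (hcard : 3 ≤ Nat.card V) {n : ℕ} (e : Γ ≃g cycGraph n) :
    3 ≤ n := by
  rwa [Nat.card_congr e.toEquiv, Nat.card_zmod] at hcard

theorem iso_completeBipartiteGraph_fin_of_iso_zmod (hcard : 3 ≤ Nat.card V) {s t : ℕ}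
    (e : Γ ≃g completeBipartiteGraph (ZMod s) (ZMod t)) :
    1 ≤ s ∧ 1 ≤ t ∧ 1 < s * t ∧ Nonempty (Γ ≃g completeBipartiteGraph (Fin s) (Fin t)) := by
  have : Finite V := Nat.finite_of_card_ne_zero (by omega)
  have : Finite (ZMod s ⊕ ZMod t) := .of_equiv V e.toEquiv
  have : Finite (ZMod s) := .sum_left (ZMod t)
  have : Finite (ZMod t) := .sum_right (ZMod s)
  have hs : 1 ≤ s := Nat.card_zmod s ▸ Nat.card_pos
  have ht : 1 ≤ t := Nat.card_zmod t ▸ Nat.card_pos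
  rw [Nat.card_congr e.toEquiv, Nat.card_sum, Nat.card_zmod, Nat.card_zmod] at hcard
  exact ⟨hs, ht, by nlinarith, ⟨e.trans (completeBipartiteGraphCongr
    (Finite.equivFinOfCardEq (Nat.card_zmod s)) (Finite.equivFinOfCardEq (Nat.card_zmod t)))⟩⟩

theorem edgeSet_eq_range_of_forall_exists_zpow {g : Γ ≃g Γ} {u v : V} (huv : Γ.Adj u v)
    (htrans : ∀ e ∈ Γ.edgeSet, ∃ k : ℤ, Sym2.map ⇑(g ^ k) s(u, v) = e) :
    Γ.edgeSet = Set.range fun k : ℤ => s((g ^ k) • u, (g ^ k) • v) := by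
  refine Set.Subset.antisymm htrans ?_
  rintro _ ⟨k, rfl⟩
  exact (g ^ k).map_adj_iff.2 huv

end Graph

theorem stmt0_general {V : Type*} [Nontrivial V] (Γ : SimpleGraph V) (hconn : Γ.Connected)
    (g : Γ ≃g Γ)
    (htrans : ∀ e ∈ Γ.edgeSet, ∀ e' ∈ Γ.edgeSet, ∃ k : ℤ, Sym2.map ⇑(g ^ k) e = e') :
    (∃ n : ℕ, Nonempty (Γ ≃g cycGraph n)) ∨
    (∃ s t : ℕ, s.Coprime t ∧ Nonempty (Γ ≃g completeBipartiteGraph (ZMod s) (ZMod t))) := by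
  obtain ⟨u⟩ := hconn.nonempty
  obtain ⟨v, huv⟩ := hconn.preconnected.exists_adj_of_nontrivial u
  have hΓ := edgeSet_eq_range_of_forall_exists_zpow huv (htrans s(u, v) huv)
  by_cases hv : ∃ a : ℤ, g ^ a • u = v
  · obtain ⟨a, rfl⟩ := hv
    exact Or.inl (exists_iso_cycGraph_of_edgeSet_eq_range hconn hΓ)
  · obtain ⟨s, t, ⟨e⟩⟩ := exists_iso_residueGraph hconn.preconnected hΓ (not_exists.1 hv)
    have hst := coprime_of_preconnected_residueGraph (e.connected_iff.1 hconn).preconnected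
    exact Or.inr ⟨s, t, hst, ⟨residueGraph_eq_completeBipartiteGraph hst ▸ e⟩⟩

theorem stmt0 {V : Type} [Fintype V] (Γ : SimpleGraph V)
    (hconn : Γ.Connected) (hcard : 3 ≤ Fintype.card V)
    (g : Γ ≃g Γ)
    (htrans : ∀ e ∈ Γ.edgeSet, ∀ e' ∈ Γ.edgeSet, ∃ k : ℤ, Sym2.map ⇑(g ^ k) e = e')
    (hfree : ∀ k : ℤ, ∀ e ∈ Γ.edgeSet, Sym2.map ⇑(g ^ k) e = e → g ^ k = 1) :
    (∃ n : ℕ, 3 ≤ n ∧ Nonempty (Γ ≃g cycGraph n)) ∨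
    (∃ s t : ℕ, 1 ≤ s ∧ 1 ≤ t ∧ 1 < s * t ∧ Nat.gcd s t = 1 ∧
      Nonempty (Γ ≃g completeBipartiteGraph (Fin s) (Fin t))) := by
  have : Nontrivial V := Fintype.one_lt_card_iff_nontrivial.1 (by omega)
  rw [← Nat.card_eq_fintype_card] at hcard
  exact (stmt0_general Γ hconn g htrans).imp
    (fun ⟨n, ⟨e⟩⟩ => ⟨n, three_le_of_iso_cycGraph hcard e, ⟨e⟩⟩)
    (fun ⟨s, t, hst, ⟨e⟩⟩ =>
      have ⟨hs, ht, hmul, he⟩ := iso_completeBipartiteGraph_fin_of_iso_zmod hcard e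
      ⟨s, t, hs, ht, hmul, hst, he⟩)
end

section
/- Let Γ be a finite simple graph with no isolated vertices, and let g be an automorphism of Γ such that the cyclic group generated by g acts transitively on the edge set of Γ. Then for every connected component of Γ, the subgraph induced on that component is isomorphic to a single edge K_2, or to the cycle graph C_n for some n ≥ 3, or to the complete bipartite graph with parts Fin s and Fin t for some s, t with s·t > 1 and Nat.gcd s t = 1; moreover, the subgraphs induced on any two connected components of Γ are isomorphic to each other. -/
/-!
Fix an edge `uv` and write `a` for the automorphism, so that the edges are the pairs
`{a ^ k u, a ^ k v}`. If `v = a ^ m u`, the neighbours of a vertex `x` in the orbit of `u` are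
`a ^ m x` and `a ^ (-m) x`, so the component of `u` is the orbit of `u` under `a ^ m`, arranged in
a cycle.

If `u` and `v` lie in different orbits, of sizes `S` and `T`, then `a ^ i u` is adjacent to
`a ^ j v` iff some `k` satisfies `k ≡ i` mod `S` and `k ≡ j` mod `T`, that is, iff `d = gcd S T`
divides `i - j`. So the component of `u` is complete bipartite between the orbits of `u` and of `v`
under `a ^ d`, whose sizes `S / d` and `T / d` are coprime.

A power of `a` carrying an edge of one component to an edge of another carries the first component
isomorphically onto the second.
-/

open SimpleGraph MulAction Subgroup

lemma exists_dvd_sub_and_dvd_sub {m n i j : ℤ} (h : (Int.gcd m n : ℤ) ∣ i - j) :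
    ∃ k : ℤ, m ∣ k - i ∧ n ∣ k - j := by
  obtain ⟨q, hq⟩ := h
  have bezout := Int.gcd_eq_gcd_ab m n
  refine ⟨i - m * m.gcdA n * q, ⟨-(m.gcdA n * q), by ring⟩, ⟨m.gcdB n * q, ?_⟩⟩
  linear_combination hq + q * bezout

section CyclicAction

variable {G α : Type*} [Group G] [MulAction G α]

lemma zpow_smul_eq_zpow_smul_iff {a : G} {x : α} {i j : ℤ} :
    a ^ i • x = a ^ j • x ↔ (period a x : ℤ) ∣ i - j := by
  rw [← zpow_smul_eq_iff_period_dvd, ← neg_add_eq_sub, zpow_add, mul_smul, zpow_neg,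
    inv_smul_eq_iff]

lemma card_orbit_zpowers (a : G) (x : α) : Nat.card (orbit (zpowers a) x) = period a x := by
  rw [Nat.card_congr (orbitZPowersEquiv a x), Nat.card_zmod, period_eq_minimalPeriod]

lemma mem_orbit_zpowers_iff {a : G} {x y : α} :
    y ∈ orbit (zpowers a) x ↔ ∃ k : ℤ, a ^ k • x = y := by
  simp [mem_orbit_iff, Subgroup.smul_def]

lemma mem_orbit_zpowers_pow_iff {a : G} {d : ℕ} {x y : α} :
    y ∈ orbit (zpowers (a ^ d)) x ↔ ∃ k : ℤ, (d : ℤ) ∣ k ∧ a ^ k • x = y := by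
  rw [mem_orbit_zpowers_iff]
  constructor
  · rintro ⟨k, rfl⟩
    exact ⟨d * k, dvd_mul_right _ _, by rw [zpow_mul, zpow_natCast]⟩
  · rintro ⟨_, ⟨k, rfl⟩, rfl⟩
    exact ⟨k, by rw [zpow_mul, zpow_natCast]⟩

lemma period_pow_of_dvd {a : G} {x : α} {d : ℕ} (hd : d ≠ 0) (h : d ∣ period a x) :
    period (a ^ d) x = period a x / d := by
  have hiter : (a ^ d • · : α → α) = (a • ·)^[d] := (smul_iterate a d).symm
  rw [period_eq_minimalPeriod, hiter, Function.minimalPeriod_iterate_eq_div_gcd hd,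
    ← period_eq_minimalPeriod, Nat.gcd_eq_right h]

lemma coprime_period_pow_gcd (a : G) (x y : α) :
    (period (a ^ (period a x).gcd (period a y)) x).Coprime
      (period (a ^ (period a x).gcd (period a y)) y) := by
  rcases eq_or_ne ((period a x).gcd (period a y)) 0 with hd | hd
  · rw [hd, pow_zero, period_one]
    exact Nat.coprime_one_left _
  · rw [period_pow_of_dvd hd (Nat.gcd_dvd_left _ _), period_pow_of_dvd hd (Nat.gcd_dvd_right _ _)]
    exact Nat.coprime_div_gcd_div_gcd (Nat.pos_of_ne_zero hd)

lemma exists_zmod_equiv_orbit_zpowers (a : G) (x : α) :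
    ∃ e : ZMod (period a x) ≃ orbit (zpowers a) x,
      (e 0 : α) = x ∧ ∀ i, (e (i + 1) : α) = a • (e i : α) := by
  obtain ⟨e, he⟩ : ∃ e : ZMod (period a x) ≃ orbit (zpowers a) x,
      ∀ k : ℤ, (e k : α) = a ^ k • x :=
    ⟨(orbitZPowersEquiv a x).symm, fun k =>
      congrArg Subtype.val (orbitZPowersEquiv_symm_apply' a x k)⟩
  refine ⟨e, by simpa using he 0, fun i => ?_⟩
  obtain ⟨k, rfl⟩ := ZMod.intCast_surjective i
  rw [he, ← mul_smul, ← zpow_one_add, ← he, Int.cast_add, Int.cast_one, add_comm]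

end CyclicAction

section Components

variable {V W : Type*} {Γ : SimpleGraph V}

lemma supp_connectedComponentMk_eq_range {H : SimpleGraph W} (hH : H.Preconnected) (φ : H →g Γ)
    (hφ : ∀ w y, Γ.Adj (φ w) y → y ∈ Set.range φ) (w : W) :
    (Γ.connectedComponentMk (φ w)).supp = Set.range φ := by
  refine Set.Subset.antisymm (fun y hy => ?_) ?_
  · obtain ⟨p⟩ := ConnectedComponent.exact hy.symm
    have hwalk : ∀ {x z : V}, Γ.Walk x z → x ∈ Set.range φ → z ∈ Set.range φ := by
      intro x z p
      induction p with
      | nil => exact id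
      | cons hadj _ ih =>
        rintro ⟨w, rfl⟩
        exact ih (hφ w _ hadj)
    exact hwalk p ⟨w, rfl⟩
  · rintro _ ⟨w', rfl⟩
    exact ConnectedComponent.sound ((hH w' w).map φ)

lemma nonempty_induce_supp_iso {H : SimpleGraph W} (hH : H.Preconnected) (φ : H ↪g Γ)
    (hφ : ∀ w y, Γ.Adj (φ w) y → y ∈ Set.range φ) (w : W) :
    Nonempty (Γ.induce (Γ.connectedComponentMk (φ w)).supp ≃g H) := by
  have hsupp : (Γ.connectedComponentMk (φ w)).supp = Set.range φ :=
    supp_connectedComponentMk_eq_range hH φ.toHom hφ w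
  rw [hsupp]
  exact ⟨φ.isoInduceRange.symm⟩

lemma connectedComponentMk_eq_of_mem_edge {e : Sym2 V} (he : e ∈ Γ.edgeSet) {x y : V}
    (hx : x ∈ e) (hy : y ∈ e) : Γ.connectedComponentMk x = Γ.connectedComponentMk y := by
  by_cases hxy : x = y
  · rw [hxy]
  · rw [(Sym2.mem_and_mem_iff hxy).mp ⟨hx, hy⟩] at he
    exact ConnectedComponent.sound he.reachable

lemma nonempty_induce_supp_iso_connectedComponentEquiv {Γ' : SimpleGraph W} (φ : Γ ≃g Γ')
    (c : Γ.ConnectedComponent) :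
    Nonempty (Γ.induce c.supp ≃g Γ'.induce (φ.connectedComponentEquiv c).supp) :=
  ⟨⟨ConnectedComponent.isoEquivSupp φ c, φ.map_adj_iff⟩⟩

lemma completeBipartiteGraph_preconnected (A B : Type*) [Nonempty A] [Nonempty B] :
    (completeBipartiteGraph A B).Preconnected := by
  have hadj (a : A) (b : B) : (completeBipartiteGraph A B).Adj (.inl a) (.inr b) := by simp
  rintro (a | b) (a' | b')
  · exact (hadj a (Classical.arbitrary B)).reachable.trans (hadj a' _).reachable.symm
  · exact (hadj a b').reachable
  · exact (hadj a' b).reachable.symm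
  · exact (hadj (Classical.arbitrary A) b).reachable.symm.trans (hadj _ b').reachable

lemma nonempty_induce_supp_iso_completeBipartiteGraph {A B : Set V}
    (hA : ∀ x ∈ A, Γ.neighborSet x = B) (hB : ∀ y ∈ B, Γ.neighborSet y = A)
    (hBne : B.Nonempty) {u : V} (hu : u ∈ A) :
    Nonempty (Γ.induce (Γ.connectedComponentMk u).supp ≃g completeBipartiteGraph A B) := by
  have : Nonempty A := ⟨⟨u, hu⟩⟩
  have : Nonempty B := hBne.to_subtype
  have hAadj {x y : V} (hx : x ∈ A) : Γ.Adj x y ↔ y ∈ B := by rw [← hA x hx, mem_neighborSet]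
  have hBadj {x y : V} (hx : x ∈ B) : Γ.Adj x y ↔ y ∈ A := by rw [← hB x hx, mem_neighborSet]
  have hdisj {x : V} (hx : x ∈ A) : x ∉ B := (hAadj hx).not.mp Γ.irrefl
  have hinj : Function.Injective (Sum.elim Subtype.val Subtype.val : A ⊕ B → V) :=
    Subtype.val_injective.sumElim Subtype.val_injective
      fun a b hab => hdisj a.2 (hab ▸ b.2)
  let φ : completeBipartiteGraph A B ↪g Γ := ⟨⟨_, hinj⟩, by
    rintro (a | b) (a' | b')
    · simpa [hAadj a.2] using hdisj a'.2
    · simp [hAadj a.2]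
    · simp [hBadj b.2]
    · simpa [hBadj b.2] using fun h => hdisj h b'.2⟩
  refine nonempty_induce_supp_iso (completeBipartiteGraph_preconnected A B) φ ?_ (.inl ⟨u, hu⟩)
  rintro (a | b) y hy
  · exact ⟨.inr ⟨y, (hAadj a.2).mp hy⟩, rfl⟩
  · exact ⟨.inl ⟨y, (hBadj b.2).mp hy⟩, rfl⟩

lemma cycGraph_preconnected (n : ℕ) : (cycGraph n).Preconnected := by
  have hstep (i : ZMod n) : (cycGraph n).Reachable i (i + 1) := by
    by_cases hi : i = i + 1
    · rw [← hi]
    · exact Adj.reachable ⟨hi, Or.inl rfl⟩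
  have hzero (k : ℤ) : (cycGraph n).Reachable 0 k := by
    induction k with
    | zero => simp
    | succ k ih => simpa using ih.trans (hstep _)
    | pred k ih => simpa using ih.trans (by simpa using (hstep (-(k : ZMod n) - 1)).symm)
  intro i j
  obtain ⟨k, rfl⟩ := ZMod.intCast_surjective i
  obtain ⟨l, rfl⟩ := ZMod.intCast_surjective j
  exact (hzero k).symm.trans (hzero l)

-- On an infinite orbit `period b u = 0`, and `cycGraph 0` is the two-way infinite path on `ℤ`.
lemma nonempty_induce_supp_iso_cycGraph {G : Type*} [Group G] [MulAction G V] {b : G} {u : V}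
    (hadj : ∀ x ∈ orbit (zpowers b) u, ∀ y, Γ.Adj x y ↔ x ≠ y ∧ (y = b • x ∨ x = b • y)) :
    Nonempty (Γ.induce (Γ.connectedComponentMk u).supp ≃g cycGraph (period b u)) := by
  obtain ⟨e, he_zero, he_succ⟩ := exists_zmod_equiv_orbit_zpowers b u
  have hinj : Function.Injective fun i => (e i : V) := Subtype.val_injective.comp e.injective
  let φ : cycGraph (period b u) ↪g Γ := ⟨⟨_, hinj⟩, by
    intro i j
    simp [hadj _ (e i).2, ← he_succ, Subtype.val_inj, cycGraph]⟩
  have hclosed (i) (y : V) (hy : Γ.Adj (e i) y) : y ∈ Set.range φ := by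
    rcases ((hadj _ (e i).2 y).mp hy).2 with h | h
    · exact ⟨i + 1, (he_succ i).trans h.symm⟩
    · refine ⟨i - 1, smul_left_cancel b ?_⟩
      rw [← h]
      exact (he_succ (i - 1)).symm.trans (by rw [sub_add_cancel])
  have hφ_zero : φ 0 = u := he_zero
  have hiso := nonempty_induce_supp_iso (cycGraph_preconnected _) φ hclosed 0
  rwa [hφ_zero] at hiso

end Components

section EdgeOrbit

variable {G V : Type*} [Group G] [MulAction G V] {Γ : SimpleGraph V} {a : G} {u v : V}

/-- The graph whose edges form the orbit of the edge `uv` under the cyclic group generated by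
`a`. If `u = v` it has no edges. -/
def edgeOrbitGraph (a : G) (u v : V) : SimpleGraph V :=
  SimpleGraph.fromRel fun x y => ∃ k : ℤ, a ^ k • u = x ∧ a ^ k • v = y

lemma edgeOrbitGraph_comm (a : G) (u v : V) : edgeOrbitGraph a u v = edgeOrbitGraph a v u := by
  ext x y
  simp only [edgeOrbitGraph, fromRel_adj, and_comm, or_comm]

lemma edgeOrbitGraph_zpow_smul_adj_iff {m : ℤ} {x : V} (hx : x ∈ orbit (zpowers a) u) {y : V} :
    (edgeOrbitGraph a u (a ^ m • u)).Adj x y ↔ x ≠ y ∧ (y = a ^ m • x ∨ x = a ^ m • y) := by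
  obtain ⟨i, rfl⟩ := mem_orbit_zpowers_iff.mp hx
  have hcomm (k : ℤ) : a ^ k • a ^ m • u = a ^ m • a ^ k • u := by
    rw [smul_smul, smul_smul, zpow_mul_comm]
  simp only [edgeOrbitGraph, fromRel_adj, hcomm]
  refine and_congr_right fun _ => or_congr ?_ ?_
  · exact ⟨fun ⟨k, hk, hy⟩ => by rw [← hy, hk], fun hy => ⟨i, rfl, hy.symm⟩⟩
  · constructor
    · rintro ⟨k, rfl, hk⟩
      exact hk.symm
    · intro hy
      have hy' : a ^ (i - m) • u = y := by
        rw [← neg_add_eq_sub, zpow_add, mul_smul, hy, zpow_neg, inv_smul_smul]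
      exact ⟨i - m, hy', by rw [hy', hy]⟩

lemma edgeOrbitGraph_neighborSet_of_mem_orbit (hv : v ∉ orbit (zpowers a) u) {x : V}
    (hx : x ∈ orbit (zpowers (a ^ (period a u).gcd (period a v))) u) :
    (edgeOrbitGraph a u v).neighborSet x =
      orbit (zpowers (a ^ (period a u).gcd (period a v))) v := by
  have hne (k l : ℤ) : a ^ k • v ≠ a ^ l • u := fun h => hv <| by
    rw [mem_orbit_zpowers_iff]
    exact ⟨-k + l, by rw [zpow_add, mul_smul, ← h, zpow_neg, inv_smul_smul]⟩
  obtain ⟨i, hi, rfl⟩ := mem_orbit_zpowers_pow_iff.mp hx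
  ext y
  rw [mem_neighborSet, mem_orbit_zpowers_pow_iff]
  constructor
  · rintro ⟨-, ⟨k, hk, rfl⟩ | ⟨k, -, hk⟩⟩
    · have hki := (Int.natCast_dvd_natCast.mpr (Nat.gcd_dvd_left (period a u) (period a v))).trans
        (zpow_smul_eq_zpow_smul_iff.mp hk)
      exact ⟨k, (dvd_sub_left hi).mp hki, rfl⟩
    · exact absurd hk (hne k i)
  · rintro ⟨j, hj, rfl⟩
    obtain ⟨k, hki, hkj⟩ := exists_dvd_sub_and_dvd_sub (m := period a u) (n := period a v)
      (dvd_sub hi hj)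
    exact ⟨(hne j i).symm, Or.inl
      ⟨k, zpow_smul_eq_zpow_smul_iff.mpr hki, zpow_smul_eq_zpow_smul_iff.mpr hkj⟩⟩

lemma nonempty_induce_supp_iso_cycGraph_of_eq_edgeOrbitGraph {m : ℤ}
    (hΓ : Γ = edgeOrbitGraph a u (a ^ m • u)) :
    Nonempty (Γ.induce (Γ.connectedComponentMk u).supp ≃g cycGraph (period (a ^ m) u)) := by
  subst hΓ
  refine nonempty_induce_supp_iso_cycGraph fun x hx y => edgeOrbitGraph_zpow_smul_adj_iff ?_
  obtain ⟨k, rfl⟩ := mem_orbit_zpowers_iff.mp hx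
  exact mem_orbit_zpowers_iff.mpr ⟨m * k, by rw [zpow_mul]⟩

lemma exists_induce_supp_iso_completeBipartiteGraph_of_eq_edgeOrbitGraph
    (hΓ : Γ = edgeOrbitGraph a u v) (hv : v ∉ orbit (zpowers a) u) :
    ∃ A B : Set V, A.Nonempty ∧ B.Nonempty ∧ (Nat.card A).Coprime (Nat.card B) ∧
      Nonempty (Γ.induce (Γ.connectedComponentMk u).supp ≃g completeBipartiteGraph A B) := by
  subst hΓ
  have hu : u ∉ orbit (zpowers a) v := fun h => hv (mem_orbit_symm.mp h)
  refine ⟨orbit (zpowers (a ^ (period a u).gcd (period a v))) u,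
    orbit (zpowers (a ^ (period a u).gcd (period a v))) v,
    ⟨u, mem_orbit_self u⟩, ⟨v, mem_orbit_self v⟩, ?_, ?_⟩
  · rw [card_orbit_zpowers, card_orbit_zpowers]
    exact coprime_period_pow_gcd a u v
  · refine nonempty_induce_supp_iso_completeBipartiteGraph
      (fun x hx => edgeOrbitGraph_neighborSet_of_mem_orbit hv hx) (fun y hy => ?_)
      ⟨v, mem_orbit_self v⟩ (mem_orbit_self u)
    rw [Nat.gcd_comm] at hy ⊢
    rw [edgeOrbitGraph_comm]
    exact edgeOrbitGraph_neighborSet_of_mem_orbit hu hy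

end EdgeOrbit

section Classification

variable {V : Type*} {Γ : SimpleGraph V}

lemma eq_edgeOrbitGraph {g : Γ ≃g Γ} {u v : V} (huv : Γ.Adj u v)
    (htrans : ∀ e ∈ Γ.edgeSet, ∃ k : ℤ, Sym2.map ⇑(g ^ k) s(u, v) = e) :
    Γ = edgeOrbitGraph g u v := by
  ext x y
  constructor
  · intro hxy
    obtain ⟨k, hk⟩ := htrans s(x, y) hxy
    rw [Sym2.map_mk, Sym2.eq_iff] at hk
    exact ⟨hxy.ne, hk.imp (fun h => ⟨k, h⟩) fun h => ⟨k, h⟩⟩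
  · rintro ⟨-, ⟨k, rfl, rfl⟩ | ⟨k, rfl, rfl⟩⟩
    · exact (g ^ k).map_adj_iff.mpr huv
    · exact (g ^ k).map_adj_iff.mpr huv.symm

lemma cycGraph_two : cycGraph 2 = ⊤ := by
  ext i j
  simp only [cycGraph, fromRel_adj, top_adj]
  revert i j
  decide

lemma completeBipartiteGraph_eq_top (A B : Type*) [Subsingleton A] [Subsingleton B] :
    completeBipartiteGraph A B = ⊤ := by
  ext (a | b) (a' | b')
  · simp [Subsingleton.elim a a']
  · simp
  · simp
  · simp [Subsingleton.elim b b']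

lemma nonempty_iso_completeGraph_or_cycGraph [Finite V] {n : ℕ} (hn : n ≠ 1)
    (e : Γ ≃g cycGraph n) :
    Nonempty (Γ ≃g completeGraph (Fin 2)) ∨ ∃ m : ℕ, 3 ≤ m ∧ Nonempty (Γ ≃g cycGraph m) := by
  have : Finite (ZMod n) := Finite.of_equiv V e.toEquiv
  have hn_pos : 0 < n := by
    rw [← Nat.card_zmod n]
    exact Finite.card_pos
  obtain rfl | hn_three : n = 2 ∨ 3 ≤ n := by omega
  · exact Or.inl ⟨(cycGraph_two ▸ e).trans (Iso.completeGraph (ZMod.finEquiv 2).toEquiv.symm)⟩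
  · exact Or.inr ⟨n, hn_three, ⟨e⟩⟩

lemma nonempty_iso_completeGraph_or_completeBipartiteGraph [Finite V] {A B : Type*} [Nonempty A]
    [Nonempty B] (hAB : (Nat.card A).Coprime (Nat.card B)) (e : Γ ≃g completeBipartiteGraph A B) :
    Nonempty (Γ ≃g completeGraph (Fin 2)) ∨ ∃ s t : ℕ, 1 < s * t ∧ Nat.gcd s t = 1 ∧
      Nonempty (Γ ≃g completeBipartiteGraph (Fin s) (Fin t)) := by
  have : Finite (A ⊕ B) := Finite.of_equiv V e.toEquiv
  have : Finite A := Finite.sum_left B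
  have : Finite B := Finite.sum_right A
  have hpos : 0 < Nat.card A * Nat.card B := Nat.mul_pos Finite.card_pos Finite.card_pos
  rcases (Nat.succ_le_iff.mpr hpos).eq_or_lt with hone | hlt
  · obtain ⟨hA, hB⟩ := mul_eq_one.mp hone.symm
    have := (Nat.card_eq_one_iff_unique.mp hA).1
    have := (Nat.card_eq_one_iff_unique.mp hB).1
    have hcard : Nat.card (A ⊕ B) = 2 := by rw [Nat.card_sum, hA, hB, one_add_one_eq_two]
    exact Or.inl ⟨(completeBipartiteGraph_eq_top A B ▸ e).trans
      (Iso.completeGraph (Finite.equivFinOfCardEq hcard))⟩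
  · exact Or.inr ⟨_, _, hlt, hAB, ⟨e.trans
      (completeBipartiteGraphCongr (Finite.equivFin A) (Finite.equivFin B))⟩⟩

theorem stmt1_general (Γ : SimpleGraph V) (hniso : ∀ v : V, ∃ w : V, Γ.Adj v w) (g : Γ ≃g Γ)
    (htrans : ∀ e ∈ Γ.edgeSet, ∀ e' ∈ Γ.edgeSet, ∃ k : ℤ, Sym2.map ⇑(g ^ k) e = e') :
    (∀ c : Γ.ConnectedComponent, c.supp.Finite →
      Nonempty (Γ.induce c.supp ≃g completeGraph (Fin 2)) ∨
      (∃ n : ℕ, 3 ≤ n ∧ Nonempty (Γ.induce c.supp ≃g cycGraph n)) ∨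
      (∃ s t : ℕ, 1 < s * t ∧ Nat.gcd s t = 1 ∧
        Nonempty (Γ.induce c.supp ≃g completeBipartiteGraph (Fin s) (Fin t)))) ∧
    (∀ c c' : Γ.ConnectedComponent, Nonempty (Γ.induce c.supp ≃g Γ.induce c'.supp)) := by
  refine ⟨fun c hc => ?_, fun c c' => ?_⟩
  · induction c using ConnectedComponent.ind with | h u
    obtain ⟨v, huv⟩ := hniso u
    have hΓ : Γ = edgeOrbitGraph g u v := eq_edgeOrbitGraph huv (htrans _ huv)
    have : Finite (Γ.connectedComponentMk u).supp := hc.to_subtype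
    by_cases hv : v ∈ orbit (zpowers g) u
    · obtain ⟨m, rfl⟩ := mem_orbit_zpowers_iff.mp hv
      obtain ⟨e⟩ := nonempty_induce_supp_iso_cycGraph_of_eq_edgeOrbitGraph hΓ
      have hperiod : period (g ^ m) u ≠ 1 := period_eq_one_iff.not.mpr huv.ne'
      exact (nonempty_iso_completeGraph_or_cycGraph hperiod e).imp_right Or.inl
    · obtain ⟨A, B, hA, hB, hAB, ⟨e⟩⟩ :=
        exists_induce_supp_iso_completeBipartiteGraph_of_eq_edgeOrbitGraph hΓ hv
      have := hA.to_subtype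
      have := hB.to_subtype
      exact (nonempty_iso_completeGraph_or_completeBipartiteGraph hAB e).imp_right Or.inr
  · induction c, c' using ConnectedComponent.ind₂ with | h u u'
    obtain ⟨v, huv⟩ := hniso u
    obtain ⟨v', huv'⟩ := hniso u'
    obtain ⟨k, hk⟩ := htrans s(u, v) huv s(u', v') huv'
    have hmem : (g ^ k) u ∈ s(u', v') := hk ▸ Sym2.mem_map.mpr ⟨u, Sym2.mem_mk_left u v, rfl⟩
    have hcomp : (g ^ k).connectedComponentEquiv (Γ.connectedComponentMk u) =
        Γ.connectedComponentMk u' :=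
      connectedComponentMk_eq_of_mem_edge huv' hmem (Sym2.mem_mk_left u' v')
    rw [← hcomp]
    exact nonempty_induce_supp_iso_connectedComponentEquiv (g ^ k) _

end Classification

theorem stmt1 {V : Type} [Fintype V] (Γ : SimpleGraph V)
    (hniso : ∀ v : V, ∃ w : V, Γ.Adj v w)
    (g : Γ ≃g Γ)
    (htrans : ∀ e ∈ Γ.edgeSet, ∀ e' ∈ Γ.edgeSet, ∃ k : ℤ, Sym2.map ⇑(g ^ k) e = e') :
    (∀ c : Γ.ConnectedComponent,
      Nonempty (Γ.induce c.supp ≃g SimpleGraph.completeGraph (Fin 2)) ∨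
      (∃ n : ℕ, 3 ≤ n ∧ Nonempty (Γ.induce c.supp ≃g cycGraph n)) ∨
      (∃ s t : ℕ, 1 < s * t ∧ Nat.gcd s t = 1 ∧
        Nonempty (Γ.induce c.supp ≃g completeBipartiteGraph (Fin s) (Fin t)))) ∧
    (∀ c c' : Γ.ConnectedComponent,
      Nonempty (Γ.induce c.supp ≃g Γ.induce c'.supp)) := by
  obtain ⟨hclass, hiso⟩ := stmt1_general Γ hniso g htrans
  exact ⟨fun c => hclass c (Set.toFinite _), hiso⟩
end

section
/- Let s, t ≥ 1 with s·t > 1 and Nat.gcd s t = 1, and let Γ be the complete bipartite graph with parts ZMod s and ZMod t. The map σ defined by σ(inl i) = inl (i+1) and σ(inr j) = inr (j+1) is an automorphism of Γ of order s·t, the cyclic group generated by σ acts regularly (transitively and freely) on the edge set of Γ, and its orbits on the vertex set are exactly the two summands. -/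
/-!
Send `(i, j)` to the edge between `inl i` and `inr j`. This identifies the edges of the complete
bipartite graph on additive groups `A` and `B` with `A × B`, on which `A × B` acts regularly by
translation. Hence translation by `p` generates a group acting freely on the edges, and
transitively as soon as `p` generates `A × B`. By the Chinese remainder theorem, `(1, 1)` generates
`ZMod s × ZMod t` when `s` and `t` are coprime.
-/

open SimpleGraph

section Congr

variable (A B : Type*)

/-- The homomorphism from `Perm A × Perm B` to the automorphism group of the complete bipartite
graph on `A ⊕ B`, each factor permuting its own part; the graph version of
`Equiv.Perm.sumCongrHom`. -/
def completeBipartiteGraphCongrHom :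
    Equiv.Perm A × Equiv.Perm B →* (completeBipartiteGraph A B ≃g completeBipartiteGraph A B) where
  toFun f := completeBipartiteGraphCongr f.1 f.2
  map_one' := by ext (_ | _) <;> rfl
  map_mul' _ _ := by ext (_ | _) <;> rfl

end Congr

section Translation

variable {A B : Type*} [AddGroup A] [AddGroup B]

/-- Translation by `p : A × B` on the complete bipartite graph on `A ⊕ B`: the automorphism that
adds `p.1` on the right in the part `A` and `p.2` on the right in the part `B`. -/
def bipartiteTranslation (p : A × B) : completeBipartiteGraph A B ≃g completeBipartiteGraph A B :=
  completeBipartiteGraphCongrHom A B (Equiv.addRight p.1, Equiv.addRight p.2)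

namespace bipartiteTranslation

@[simp]
theorem apply_inl (p : A × B) (a : A) : bipartiteTranslation p (.inl a) = .inl (a + p.1) := rfl

@[simp]
theorem apply_inr (p : A × B) (b : B) : bipartiteTranslation p (.inr b) = .inr (b + p.2) := rfl

theorem zpow_eq (p : A × B) (k : ℤ) :
    bipartiteTranslation p ^ k = bipartiteTranslation (k • p) := by
  simp only [bipartiteTranslation, ← map_zpow, Prod.pow_mk, Equiv.zsmul_addRight, Prod.smul_fst,
    Prod.smul_snd]

theorem eq_one_iff {p : A × B} : bipartiteTranslation p = 1 ↔ p = 0 := by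
  constructor
  · intro h
    have h_inl := DFunLike.congr_fun h (.inl 0)
    have h_inr := DFunLike.congr_fun h (.inr 0)
    ext
    · simpa using h_inl
    · simpa using h_inr
  · rintro rfl
    ext (_ | _) <;> simp

theorem orderOf_eq_addOrderOf (p : A × B) : orderOf (bipartiteTranslation p) = addOrderOf p := by
  refine Nat.dvd_right_iff_eq.mp fun n => ?_
  rw [orderOf_dvd_iff_pow_eq_one, addOrderOf_dvd_iff_nsmul_eq_zero, ← zpow_natCast, zpow_eq,
    eq_one_iff, natCast_zsmul]

section Edges

variable {e e' : Sym2 (A ⊕ B)}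

theorem existsUnique_map_eq (he : e ∈ (completeBipartiteGraph A B).edgeSet)
    (he' : e' ∈ (completeBipartiteGraph A B).edgeSet) :
    ∃! p : A × B, Sym2.map (bipartiteTranslation p) e = e' := by
  rw [edgeSet_completeBipartiteGraph] at he he'
  obtain ⟨⟨a, b⟩, rfl⟩ := he
  obtain ⟨⟨a', b'⟩, rfl⟩ := he'
  refine ⟨(-a + a', -b + b'), by simp, fun p hp => ?_⟩
  obtain ⟨rfl, rfl⟩ : a + p.1 = a' ∧ b + p.2 = b' := by
    simpa using hp
  simp only [neg_add_cancel_left]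

theorem exists_zpow_map_eq {p : A × B} (hp : ∀ q, q ∈ AddSubgroup.zmultiples p)
    (he : e ∈ (completeBipartiteGraph A B).edgeSet)
    (he' : e' ∈ (completeBipartiteGraph A B).edgeSet) :
    ∃ k : ℤ, Sym2.map (bipartiteTranslation p ^ k) e = e' := by
  obtain ⟨q, hq, -⟩ := existsUnique_map_eq he he'
  obtain ⟨k, rfl⟩ := AddSubgroup.mem_zmultiples_iff.mp (hp q)
  exact ⟨k, by rwa [zpow_eq]⟩

theorem eq_one_of_map_eq_self {p : A × B} (he : e ∈ (completeBipartiteGraph A B).edgeSet)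
    (h : Sym2.map (bipartiteTranslation p) e = e) : bipartiteTranslation p = 1 := by
  have h_zero : Sym2.map (bipartiteTranslation (0 : A × B)) e = e := by
    rw [eq_one_iff.mpr rfl, RelIso.coe_one, Sym2.map_id, id]
  exact eq_one_iff.mpr ((existsUnique_map_eq he he).unique h h_zero)

end Edges

theorem orbit_inl_eq_range {p : A × B} (hp : ∀ a, a ∈ AddSubgroup.zmultiples p.1) (a : A) :
    {w | ∃ k : ℤ, (bipartiteTranslation p ^ k) (.inl a) = w} = Set.range Sum.inl := by
  ext w
  constructor
  · rintro ⟨k, rfl⟩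
    exact ⟨a + k • p.1, by rw [zpow_eq, apply_inl, Prod.smul_fst]⟩
  · rintro ⟨a', rfl⟩
    obtain ⟨k, hk⟩ := AddSubgroup.mem_zmultiples_iff.mp (hp (-a + a'))
    exact ⟨k, by rw [zpow_eq, apply_inl, Prod.smul_fst, hk, add_neg_cancel_left]⟩

theorem orbit_inr_eq_range {p : A × B} (hp : ∀ b, b ∈ AddSubgroup.zmultiples p.2) (b : B) :
    {w | ∃ k : ℤ, (bipartiteTranslation p ^ k) (.inr b) = w} = Set.range Sum.inr := by
  ext w
  constructor
  · rintro ⟨k, rfl⟩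
    exact ⟨b + k • p.2, by rw [zpow_eq, apply_inr, Prod.smul_snd]⟩
  · rintro ⟨b', rfl⟩
    obtain ⟨k, hk⟩ := AddSubgroup.mem_zmultiples_iff.mp (hp (-b + b'))
    exact ⟨k, by rw [zpow_eq, apply_inr, Prod.smul_snd, hk, add_neg_cancel_left]⟩

end bipartiteTranslation

end Translation

section ZMod

theorem mem_zmultiples_one_zmod {n : ℕ} (a : ZMod n) : a ∈ AddSubgroup.zmultiples 1 := by
  obtain ⟨k, rfl⟩ := ZMod.intCast_surjective a
  exact AddSubgroup.intCast_mem_zmultiples_one k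

theorem mem_zmultiples_one_zmod_prod {s t : ℕ} (h : s.Coprime t) (x : ZMod s × ZMod t) :
    x ∈ AddSubgroup.zmultiples 1 := by
  obtain ⟨y, rfl⟩ := (ZMod.chineseRemainder h).surjective x
  obtain ⟨k, rfl⟩ := ZMod.intCast_surjective y
  rw [map_intCast]
  exact AddSubgroup.intCast_mem_zmultiples_one k

theorem addOrderOf_one_zmod_prod (s t : ℕ) : addOrderOf (1 : ZMod s × ZMod t) = s.lcm t := by
  rw [Prod.addOrderOf, Prod.fst_one, Prod.snd_one, ZMod.addOrderOf_one, ZMod.addOrderOf_one]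

end ZMod

theorem stmt4 (s t : ℕ) (hs : 1 ≤ s) (ht : 1 ≤ t) (hst : 1 < s * t)
    (hgcd : Nat.gcd s t = 1) :
    ∃ σ : completeBipartiteGraph (ZMod s) (ZMod t) ≃g completeBipartiteGraph (ZMod s) (ZMod t),
      (∀ i : ZMod s, σ (Sum.inl i) = Sum.inl (i + 1)) ∧
      (∀ j : ZMod t, σ (Sum.inr j) = Sum.inr (j + 1)) ∧
      orderOf σ = s * t ∧
      -- the cyclic group generated by `σ` acts transitively on the edge set
      (∀ e ∈ (completeBipartiteGraph (ZMod s) (ZMod t)).edgeSet,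
        ∀ e' ∈ (completeBipartiteGraph (ZMod s) (ZMod t)).edgeSet,
          ∃ k : ℤ, Sym2.map ⇑(σ ^ k) e = e') ∧
      -- and freely
      (∀ k : ℤ, ∀ e ∈ (completeBipartiteGraph (ZMod s) (ZMod t)).edgeSet,
        Sym2.map ⇑(σ ^ k) e = e → σ ^ k = 1) ∧
      -- its vertex orbits are exactly the two summands
      (∀ i : ZMod s, {w : ZMod s ⊕ ZMod t | ∃ k : ℤ, (σ ^ k) (Sum.inl i) = w} =
        Set.range Sum.inl) ∧
      (∀ j : ZMod t, {w : ZMod s ⊕ ZMod t | ∃ k : ℤ, (σ ^ k) (Sum.inr j) = w} =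
        Set.range Sum.inr) := by
  refine ⟨bipartiteTranslation 1, bipartiteTranslation.apply_inl 1,
    bipartiteTranslation.apply_inr 1, ?_, ?_, ?_, ?_, ?_⟩
  · rw [bipartiteTranslation.orderOf_eq_addOrderOf, addOrderOf_one_zmod_prod,
      Nat.Coprime.lcm_eq_mul hgcd]
  · intro e he e' he'
    exact bipartiteTranslation.exists_zpow_map_eq (mem_zmultiples_one_zmod_prod hgcd) he he'
  · intro k e he h
    rw [bipartiteTranslation.zpow_eq] at h ⊢
    exact bipartiteTranslation.eq_one_of_map_eq_self he h
  · exact bipartiteTranslation.orbit_inl_eq_range mem_zmultiples_one_zmod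
  · exact bipartiteTranslation.orbit_inr_eq_range mem_zmultiples_one_zmod
end

section
/- Let n ≥ 5 and let a, b : ZMod n be such that a, −a, b, −b are four pairwise distinct nonzero elements, the additive subgroup of ZMod n generated by {a, b} is all of ZMod n, and either the additive order of a + b equals n or the additive order of a − b equals n. Then Γ = Circ(n,{a,−a,b,−b}) has an Eulerian circuit with edge list (e_0, …, e_{2n−1}) such that there exist automorphisms σ and ρ of Γ with σ(e_i) = e_{(i+2) mod 2n} for all i and ρ(e_i) = e_{(−i) mod 2n} for all i. -/
/-- The circulant graph `Circ(n, {a, -a, b, -b})` on `ZMod n`: distinct `i, j` are adjacent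
iff `j - i ∈ {a, -a, b, -b}`. -/
def circGraph (n : ℕ) (a b : ZMod n) : SimpleGraph (ZMod n) :=
  SimpleGraph.fromRel (fun i j => j - i = a ∨ j - i = b)

/-!
Walk through the group by adding `a` and `b` alternately. The even-numbered vertices of this walk
are the multiples of `a + b`, so when `a + b` generates the group, each element `x` is the start of
exactly one `a`-step and of exactly one `b`-step. No edge arises from two of these steps because
`a, -a, b, -b` are distinct, so the walk closes up into an Eulerian circuit.
Translation by `a + b` shifts the walk by two steps, and `x ↦ a - x` reverses it.
Replacing `b` by `-b` does not change the graph, which settles the case where `a - b` generates.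
-/

open SimpleGraph AddSubgroup

section ClosedSequences

variable {V : Type*} {Γ : SimpleGraph V}

/-- `Γ` has an Eulerian circuit `(e₀, …, eₘ₋₁)` on which some automorphism acts as the two-step
rotation `eᵢ ↦ eᵢ₊₂` and some automorphism acts as the reflection `eᵢ ↦ e₋ᵢ`, with indices modulo
`m`. As indices are natural numbers, `-i` is encoded as `m - i`. -/
def HasBirotaryEulerianCircuit [DecidableEq V] (Γ : SimpleGraph V) : Prop :=
  ∃ (v : V) (p : Γ.Walk v v), p.IsEulerian ∧
    (∃ σ : Γ ≃g Γ, ∀ i : Fin p.edges.length,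
      Sym2.map ⇑σ (p.edges.get i) =
        p.edges.get ⟨((i : ℕ) + 2) % p.edges.length, Nat.mod_lt _ i.pos⟩) ∧
    (∃ ρ : Γ ≃g Γ, ∀ i : Fin p.edges.length,
      Sym2.map ⇑ρ (p.edges.get i) =
        p.edges.get ⟨(p.edges.length - (i : ℕ)) % p.edges.length, Nat.mod_lt _ i.pos⟩)

/-- The `i`-th edge of the bi-infinite vertex sequence `f`, joining `f i` to `f (i + 1)`. -/
def stepEdge (f : ℤ → V) (i : ℤ) : Sym2 V := s(f i, f (i + 1))

theorem stepEdge_eq_of_modEq {f : ℤ → V} {c i j : ℤ} (hper : f.Periodic c)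
    (hij : i ≡ j [ZMOD c]) : stepEdge f i = stepEdge f j := by
  obtain ⟨k, hk⟩ := hij.dvd
  obtain rfl : j = i + k * c := by linarith
  have hperk : f.Periodic (k * c) := by simpa only [Int.cast_id] using hper.int_mul k
  simp only [stepEdge, add_right_comm i (k * c) 1, hperk _]

theorem exists_walk_edges_eq_map_stepEdge {f : ℤ → V} (hadj : ∀ i, Γ.Adj (f i) (f (i + 1)))
    (m : ℕ) : ∃ p : Γ.Walk (f 0) (f m), p.edges = (List.range m).map fun i : ℕ => stepEdge f i := by
  induction m with
  | zero => exact ⟨.nil, rfl⟩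
  | succ m ih =>
    obtain ⟨p, hp⟩ := ih
    refine ⟨(p.concat (hadj m)).copy rfl (by rw [Nat.cast_succ]), ?_⟩
    simp [hp, List.range_succ, stepEdge]

theorem isEulerian_of_edges_eq_map_stepEdge [DecidableEq V] {f : ℤ → V} {m : ℕ} {u v : V}
    {p : Γ.Walk u v} (hp : p.edges = (List.range m).map fun i : ℕ => stepEdge f i) (hm : m ≠ 0)
    (hper : f.Periodic m) (hinj : ∀ i j, stepEdge f i = stepEdge f j → i ≡ j [ZMOD m])
    (hsurj : Γ.edgeSet ⊆ Set.range (stepEdge f)) : p.IsEulerian := by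
  refine Walk.IsTrail.isEulerian_of_forall_mem ⟨?_⟩ fun e he => ?_
  · rw [hp]
    refine List.nodup_range.map_on fun i hi j hj hij => ?_
    exact (Int.natCast_modEq_iff.1 (hinj i j hij)).eq_of_lt_of_lt
      (List.mem_range.1 hi) (List.mem_range.1 hj)
  · obtain ⟨i, rfl⟩ := hsurj he
    obtain ⟨k, hkm, hki⟩ := Int.existsUnique_equiv_nat i (Nat.cast_pos.2 (Nat.pos_of_ne_zero hm))
    rw [hp, List.mem_map]
    exact ⟨k, List.mem_range.2 (Nat.cast_lt.1 hkm), stepEdge_eq_of_modEq hper hki⟩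

theorem edges_get_eq_stepEdge {f : ℤ → V} {m : ℕ} {u v : V} {p : Γ.Walk u v}
    (hp : p.edges = (List.range m).map fun i : ℕ => stepEdge f i) (hper : f.Periodic m)
    (i : Fin p.edges.length) {j : ℤ} (hij : (i : ℤ) ≡ j [ZMOD m]) :
    p.edges.get i = stepEdge f j := by
  simpa [hp] using stepEdge_eq_of_modEq hper hij

theorem hasBirotaryEulerianCircuit_of_periodic [DecidableEq V] {f : ℤ → V} {m : ℕ} (hm : m ≠ 0)
    (hper : f.Periodic m) (hadj : ∀ i, Γ.Adj (f i) (f (i + 1)))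
    (hinj : ∀ i j, stepEdge f i = stepEdge f j → i ≡ j [ZMOD m])
    (hsurj : Γ.edgeSet ⊆ Set.range (stepEdge f))
    (σ : Γ ≃g Γ) (hσ : ∀ i, σ (f i) = f (i + 2)) (ρ : Γ ≃g Γ) (hρ : ∀ i, ρ (f i) = f (1 - i)) :
    HasBirotaryEulerianCircuit Γ := by
  obtain ⟨p, hp⟩ : ∃ p : Γ.Walk (f 0) (f 0),
      p.edges = (List.range m).map fun i : ℕ => stepEdge f i := by
    obtain ⟨p, hp⟩ := exists_walk_edges_eq_map_stepEdge hadj m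
    exact ⟨p.copy rfl hper.eq, by rw [Walk.edges_copy, hp]⟩
  have hlen : p.edges.length = m := by simp [hp]
  have hget := edges_get_eq_stepEdge hp hper
  have hσ_edge : ∀ i, Sym2.map σ (stepEdge f i) = stepEdge f (i + 2) := fun i => by
    simp only [stepEdge, Sym2.map_mk, hσ, add_right_comm i 1 2]
  have hρ_edge : ∀ i, Sym2.map ρ (stepEdge f i) = stepEdge f (-i) := fun i => by
    rw [stepEdge, Sym2.map_mk, hρ, hρ, Sym2.eq_swap, stepEdge]
    ring_nf
  refine ⟨f 0, p, isEulerian_of_edges_eq_map_stepEdge hp hm hper hinj hsurj,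
    ⟨σ, fun i => ?_⟩, ⟨ρ, fun i => ?_⟩⟩
  · rw [hget i rfl, hσ_edge]
    exact (hget _ (by simp [hlen, Int.mod_modEq])).symm
  · have hneg : (((m - i : ℕ) % m : ℕ) : ℤ) ≡ -i [ZMOD m] := by
      rw [Int.natCast_mod, Nat.cast_sub (hlen ▸ i.is_lt.le), sub_eq_neg_add]
      exact (Int.mod_modEq _ _).trans Int.add_modEq_right
    rw [hget i rfl, hρ_edge]
    exact (hget _ (by simpa only [hlen] using hneg)).symm

end ClosedSequences

section AddGroup

variable {G : Type*} [AddGroup G] {a b x y : G}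

theorem sym2_mk_add_right_inj (ha : a ≠ -a) : s(x, x + a) = s(y, y + a) ↔ x = y := by
  refine ⟨fun h => ?_, fun h => by rw [h]⟩
  obtain ⟨hxy, -⟩ | ⟨rfl, hy⟩ := Sym2.eq_iff.1 h
  · exact hxy
  · rw [add_assoc, add_eq_left] at hy
    exact absurd (eq_neg_of_add_eq_zero_left hy) ha

theorem sym2_mk_add_right_ne (hab : a ≠ b) (hab_neg : a ≠ -b) : s(x, x + a) ≠ s(y, y + b) := by
  intro h
  obtain ⟨rfl, hadd⟩ | ⟨rfl, hadd⟩ := Sym2.eq_iff.1 h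
  · exact hab (add_left_cancel hadd)
  · rw [add_assoc, add_eq_left] at hadd
    exact hab_neg (eq_neg_of_add_eq_zero_right hadd)

theorem circulantGraph_pair_neg_right (a b : G) :
    circulantGraph {a, -b} = circulantGraph {a, b} := by
  ext x y
  simp only [circulantGraph_adj, Set.mem_insert_iff, Set.mem_singleton_iff, ← neg_sub y x,
    neg_eq_iff_eq_neg, neg_neg]
  tauto

/-- Translation by `c` as an automorphism of a circulant graph. -/
def circulantGraphAddRight (s : Set G) (c : G) : circulantGraph s ≃g circulantGraph s where
  toEquiv := Equiv.addRight c
  map_rel_iff' := circulantGraph_adj_translate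

end AddGroup

section AddCommGroup

variable {G : Type*} [AddCommGroup G]

/-- The point reflection `x ↦ c - x` as an automorphism of a circulant graph. -/
def circulantGraphSubLeft (s : Set G) (c : G) : circulantGraph s ≃g circulantGraph s where
  toEquiv := Equiv.subLeft c
  map_rel_iff' := by simp [or_comm]

theorem circulantGraph_pair_adj {a b x y : G} (ha : a ≠ 0) (hb : b ≠ 0) :
    (circulantGraph {a, b}).Adj x y ↔ y = x + a ∨ y = x + b ∨ x = y + a ∨ x = y + b := by
  simp only [circulantGraph_adj, Set.mem_insert_iff, Set.mem_singleton_iff]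
  grind

end AddCommGroup

section Zigzag

variable {G : Type*} [AddCommGroup G]

/-- The bi-infinite walk through `0` that adds `a` after even times and `b` after odd times:
`⌈i / 2⌉ • a + ⌊i / 2⌋ • b`, as integer division rounds down. -/
def zigzag (a b : G) (i : ℤ) : G := ((i + 1) / 2) • a + (i / 2) • b

variable (a b : G)

theorem zigzag_add_two_mul (i k : ℤ) : zigzag a b (i + 2 * k) = zigzag a b i + k • (a + b) := by
  simp only [zigzag, show (i + 2 * k + 1) / 2 = (i + 1) / 2 + k by omega,
    show (i + 2 * k) / 2 = i / 2 + k by omega, add_zsmul, zsmul_add]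
  abel

theorem zigzag_add_two (i : ℤ) : zigzag a b (i + 2) = zigzag a b i + (a + b) := by
  simpa using zigzag_add_two_mul a b i 1

theorem zigzag_two_mul (k : ℤ) : zigzag a b (2 * k) = k • (a + b) := by
  simpa [zigzag] using zigzag_add_two_mul a b 0 k

theorem zigzag_two_mul_add_one (k : ℤ) : zigzag a b (2 * k + 1) = k • (a + b) + a := by
  simpa [zigzag, add_comm] using zigzag_add_two_mul a b 1 k

theorem zigzag_one_sub (i : ℤ) : zigzag a b (1 - i) = a - zigzag a b i := by
  simp only [zigzag, show (1 - i + 1) / 2 = 1 - (i + 1) / 2 by omega,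
    show (1 - i) / 2 = -(i / 2) by omega, sub_zsmul, neg_zsmul, one_zsmul]
  abel

theorem zigzag_periodic : (zigzag a b).Periodic (2 * addOrderOf (a + b) : ℕ) := fun i => by
  rw [Nat.cast_mul, Nat.cast_ofNat, zigzag_add_two_mul, natCast_zsmul, addOrderOf_nsmul_eq_zero,
    add_zero]

theorem stepEdge_zigzag_two_mul (k : ℤ) :
    stepEdge (zigzag a b) (2 * k) = s(k • (a + b), k • (a + b) + a) := by
  rw [stepEdge, zigzag_two_mul, zigzag_two_mul_add_one]

theorem stepEdge_zigzag_two_mul_add_one (k : ℤ) :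
    stepEdge (zigzag a b) (2 * k + 1) = s(k • (a + b) + a, k • (a + b) + a + b) := by
  rw [stepEdge, zigzag_two_mul_add_one, add_assoc (2 * k), one_add_one_eq_two, zigzag_add_two,
    zigzag_two_mul, add_assoc]

variable {a b}

theorem circulantGraph_adj_zigzag (ha : a ≠ 0) (hb : b ≠ 0) (i : ℤ) :
    (circulantGraph {a, b}).Adj (zigzag a b i) (zigzag a b (i + 1)) := by
  rw [← mem_edgeSet, ← stepEdge]
  obtain ⟨k, rfl | rfl⟩ := i.even_or_odd'
  · simp only [stepEdge_zigzag_two_mul, mem_edgeSet, circulantGraph_pair_adj ha hb, true_or]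
  · simp only [stepEdge_zigzag_two_mul_add_one, mem_edgeSet, circulantGraph_pair_adj ha hb,
      true_or, or_true]

theorem modEq_of_stepEdge_zigzag_eq (hdist : [a, -a, b, -b].Nodup) {i j : ℤ}
    (hij : stepEdge (zigzag a b) i = stepEdge (zigzag a b) j) :
    i ≡ j [ZMOD (2 * addOrderOf (a + b) : ℕ)] := by
  have hdouble : ∀ {k l : ℤ}, k • (a + b) = l • (a + b) →
      2 * k ≡ 2 * l [ZMOD (2 * addOrderOf (a + b) : ℕ)] := fun h => by
    simpa using (zsmul_eq_zsmul_iff_modEq.1 h).mul_left'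
  obtain ⟨⟨ha, hab, hab_neg⟩, -, hb⟩ :
      (a ≠ -a ∧ a ≠ b ∧ a ≠ -b) ∧ (-a ≠ b ∧ -a ≠ -b) ∧ b ≠ -b := by
    simpa only [List.nodup_cons, List.mem_cons, List.not_mem_nil, not_or, or_false, not_false_iff,
      List.nodup_nil, and_true] using hdist
  obtain ⟨k, rfl | rfl⟩ := i.even_or_odd' <;> obtain ⟨l, rfl | rfl⟩ := j.even_or_odd' <;>
    simp only [stepEdge_zigzag_two_mul, stepEdge_zigzag_two_mul_add_one] at hij
  · exact hdouble ((sym2_mk_add_right_inj ha).1 hij)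
  · exact absurd hij (sym2_mk_add_right_ne hab hab_neg)
  · exact absurd hij.symm (sym2_mk_add_right_ne hab hab_neg)
  · exact (hdouble (add_right_cancel ((sym2_mk_add_right_inj hb).1 hij))).add_right 1

theorem edgeSet_subset_range_stepEdge_zigzag (ha : a ≠ 0) (hb : b ≠ 0)
    (hgen : zmultiples (a + b) = ⊤) :
    (circulantGraph {a, b}).edgeSet ⊆ Set.range (stepEdge (zigzag a b)) := by
  have hstep_a : ∀ x, s(x, x + a) ∈ Set.range (stepEdge (zigzag a b)) := fun x => by
    obtain ⟨k, hk⟩ := mem_zmultiples_iff.1 (hgen ▸ mem_top x)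
    exact ⟨2 * k, by rw [stepEdge_zigzag_two_mul, hk]⟩
  have hstep_b : ∀ x, s(x, x + b) ∈ Set.range (stepEdge (zigzag a b)) := fun x => by
    obtain ⟨k, hk⟩ := mem_zmultiples_iff.1 (hgen ▸ mem_top (x - a))
    exact ⟨2 * k + 1, by rw [stepEdge_zigzag_two_mul_add_one, hk, sub_add_cancel]⟩
  intro e
  induction e with | _ x y
  rw [mem_edgeSet, circulantGraph_pair_adj ha hb]
  rintro (rfl | rfl | rfl | rfl)
  · exact hstep_a x
  · exact hstep_b x
  · exact Sym2.eq_swap ▸ hstep_a y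
  · exact Sym2.eq_swap ▸ hstep_b y

theorem hasBirotaryEulerianCircuit_of_addOrderOf_add [DecidableEq G] [Finite G]
    (hdist : [a, -a, b, -b].Nodup) (hord : addOrderOf (a + b) = Nat.card G) :
    HasBirotaryEulerianCircuit (circulantGraph {a, b}) := by
  have ha : a ≠ 0 := by rintro rfl; simp at hdist
  have hb : b ≠ 0 := by rintro rfl; simp at hdist
  have hgen : zmultiples (a + b) = ⊤ :=
    eq_top_of_card_eq _ ((Nat.card_zmultiples _).trans hord)
  exact hasBirotaryEulerianCircuit_of_periodic
    (mul_ne_zero two_ne_zero (addOrderOf_pos (a + b)).ne') (zigzag_periodic a b)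
    (circulantGraph_adj_zigzag ha hb) (fun _ _ => modEq_of_stepEdge_zigzag_eq hdist)
    (edgeSet_subset_range_stepEdge_zigzag ha hb hgen)
    (circulantGraphAddRight _ (a + b)) (fun i => (zigzag_add_two a b i).symm)
    (circulantGraphSubLeft _ a) (fun i => (zigzag_one_sub a b i).symm)

end Zigzag

theorem circGraph_eq_circulantGraph (n : ℕ) (a b : ZMod n) :
    circGraph n a b = circulantGraph {a, b} := by
  ext x y
  simp [circGraph, or_comm]

theorem stmt6_general {G : Type*} [AddCommGroup G] [DecidableEq G] [Finite G] {a b : G}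
    (hdist : [a, -a, b, -b].Nodup)
    (hord : addOrderOf (a + b) = Nat.card G ∨ addOrderOf (a - b) = Nat.card G) :
    HasBirotaryEulerianCircuit (circulantGraph {a, b}) := by
  rcases hord with hadd | hsub
  · exact hasBirotaryEulerianCircuit_of_addOrderOf_add hdist hadd
  · rw [sub_eq_add_neg] at hsub
    rw [← circulantGraph_pair_neg_right]
    refine hasBirotaryEulerianCircuit_of_addOrderOf_add ?_ hsub
    rw [neg_neg]
    exact (((List.Perm.swap _ _ _).cons _).cons _).nodup hdist

theorem stmt6 (n : ℕ) (hn : 5 ≤ n) (a b : ZMod n)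
    (ha : a ≠ 0) (hb : b ≠ 0) (hdist : ([a, -a, b, -b] : List (ZMod n)).Nodup)
    (hgen : AddSubgroup.closure {a, b} = (⊤ : AddSubgroup (ZMod n)))
    (hord : addOrderOf (a + b) = n ∨ addOrderOf (a - b) = n) :
    ∃ (v : ZMod n) (p : (circGraph n a b).Walk v v), p.IsEulerian ∧
      (∃ σ : circGraph n a b ≃g circGraph n a b, ∀ i : Fin p.edges.length,
        Sym2.map ⇑σ (p.edges.get i) =
          p.edges.get ⟨((i : ℕ) + 2) % p.edges.length, Nat.mod_lt _ i.pos⟩) ∧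
      (∃ ρ : circGraph n a b ≃g circGraph n a b, ∀ i : Fin p.edges.length,
        Sym2.map ⇑ρ (p.edges.get i) =
          p.edges.get ⟨(p.edges.length - (i : ℕ)) % p.edges.length, Nat.mod_lt _ i.pos⟩) := by
  have : NeZero n := ⟨by omega⟩
  rw [circGraph_eq_circulantGraph]
  exact stmt6_general hdist (by rwa [Nat.card_zmod])
end

section
/- Let r, s, t ≥ 1 and define the permutation σ of Fin r × ZMod s × ZMod t by σ(k, i, j) = (k+1, i, j) when k + 1 < r, and σ(r−1, i, j) = (0, i+1, j+1). Then the order of σ equals r · Nat.lcm s t; in particular, the cyclic group generated by σ acts transitively on Fin r × ZMod s × ZMod t if and only if Nat.gcd s t = 1. -/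
/-!
The permutation `σ` is a tower of constant height `r` over the translation `τ` by `(1, 1)`: it
climbs one floor at a time and applies `τ` on returning to the ground floor, so `σ ^ r` is `τ` on
every floor. Hence `σ ^ (r * q + k)` sends `(0, a)` to `(k, τ ^ q a)`, and, each point being in the
cycle of its base point, both the order and the cycles of `σ` are read off from those of `τ`. For a
translation these are the additive order of `(1, 1)` and the cosets of the subgroup it generates.
That subgroup is the whole product exactly when it contains `(1, 0)`, a Bézout relation between `s`
and `t`.
-/

open Equiv AddSubgroup

/-- The action of `Perm α` on `β × α` through the second coordinate, as a homomorphism: it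
lets powers and orders of permutations pass from the base of a tower to its floors. -/
def prodCongrRightHom (β α : Type*) : Perm α →* Perm (β × α) where
  toFun τ := Equiv.prodCongrRight fun _ ↦ τ
  map_one' := rfl
  map_mul' _ _ := rfl

@[simp]
theorem prodCongrRightHom_apply_apply {β α : Type*} (τ : Perm α) (b : β) (a : α) :
    prodCongrRightHom β α τ (b, a) = (b, τ a) :=
  rfl

theorem prodCongrRightHom_injective (β α : Type*) [Nonempty β] :
    Function.Injective (prodCongrRightHom β α) := by
  inhabit β
  exact fun τ τ' h ↦ Equiv.ext fun a ↦ congrArg Prod.snd (Equiv.congr_fun h (default, a))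

/-- `σ` is the tower of height `r` over the permutation `τ` of the base `α` (a Kakutani skyscraper
with constant return time): the point `(k, a)` lies on floor `k` above `a`. The two cases are those
of `k + 1` as a natural number, since addition in `Fin r` wraps around. -/
structure IsTower {α : Type*} {r : ℕ} [NeZero r] (σ : Perm (Fin r × α)) (τ : Perm α) : Prop where
  apply_of_lt : ∀ (k : Fin r) (a : α) (h : (k : ℕ) + 1 < r), σ (k, a) = (⟨k + 1, h⟩, a)
  apply_of_eq : ∀ (k : Fin r) (a : α), (k : ℕ) + 1 = r → σ (k, a) = (0, τ a)

namespace IsTower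

variable {α : Type*} {r : ℕ} [NeZero r] {σ : Perm (Fin r × α)} {τ : Perm α}

theorem pow_apply_zero (hσ : IsTower σ τ) (a : α) :
    ∀ (k : ℕ) (hk : k < r), (σ ^ k) (0, a) = (⟨k, hk⟩, a)
  | 0, _ => rfl
  | k + 1, hk => by
    rw [pow_succ', Perm.mul_apply, hσ.pow_apply_zero a k (by lia), hσ.apply_of_lt _ _ hk]

theorem pow_height_apply_zero (hσ : IsTower σ τ) (a : α) : (σ ^ r) (0, a) = (0, τ a) := by
  have hr : r - 1 + 1 = r := Nat.sub_one_add_one (NeZero.ne r)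
  calc (σ ^ r) (0, a) = σ ((σ ^ (r - 1)) (0, a)) := by rw [← Perm.mul_apply, ← pow_succ', hr]
    _ = σ (⟨r - 1, by lia⟩, a) := by rw [hσ.pow_apply_zero]
    _ = (0, τ a) := hσ.apply_of_eq _ _ hr

theorem pow_height (hσ : IsTower σ τ) : σ ^ r = prodCongrRightHom (Fin r) α τ := by
  ext1 ⟨k, a⟩
  calc (σ ^ r) (k, a) = (σ ^ r) ((σ ^ (k : ℕ)) (0, a)) := by rw [hσ.pow_apply_zero a k k.2]
    _ = (σ ^ (k : ℕ)) ((σ ^ r) (0, a)) := by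
      simp only [← Perm.mul_apply, (Commute.pow_pow_self σ r k).eq]
    _ = (k, τ a) := by rw [hσ.pow_height_apply_zero, hσ.pow_apply_zero _ k k.2]

theorem zpow_apply_zero (hσ : IsTower σ τ) (q : ℤ) (k : Fin r) (a : α) :
    (σ ^ (r * q + k : ℤ)) (0, a) = (k, (τ ^ q) a) := by
  rw [zpow_add, zpow_mul, zpow_natCast, zpow_natCast, Perm.mul_apply,
    hσ.pow_apply_zero a k k.2, hσ.pow_height, ← map_zpow, prodCongrRightHom_apply_apply]

theorem zpow_apply_zero_eq_zero_iff (hσ : IsTower σ τ) {m : ℤ} {a b : α} :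
    (σ ^ m) (0, a) = (0, b) ↔ ∃ q : ℤ, m = r * q ∧ (τ ^ q) a = b := by
  constructor
  · obtain ⟨⟨q, k⟩, rfl⟩ := (Int.divModEquiv r).symm.surjective m
    rw [Int.divModEquiv_symm_apply, mul_comm q, hσ.zpow_apply_zero, Prod.mk.injEq]
    rintro ⟨rfl, hq⟩
    exact ⟨q, by simp, hq⟩
  · rintro ⟨q, rfl, rfl⟩
    simpa using hσ.zpow_apply_zero q 0 a

theorem height_dvd_orderOf [Nonempty α] (hσ : IsTower σ τ) : r ∣ orderOf σ := by
  obtain ⟨a⟩ := ‹Nonempty α›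
  have fixed : (σ ^ (orderOf σ : ℤ)) (0, a) = (0, a) := by
    rw [zpow_natCast, pow_orderOf_eq_one, Perm.one_apply]
  obtain ⟨q, hq, -⟩ := hσ.zpow_apply_zero_eq_zero_iff.1 fixed
  exact Int.natCast_dvd_natCast.1 ⟨q, hq⟩

theorem orderOf_eq [Nonempty α] (hσ : IsTower σ τ) : orderOf σ = r * orderOf τ := by
  have order_pow : orderOf (σ ^ r) = orderOf τ := by
    rw [hσ.pow_height, orderOf_injective _ (prodCongrRightHom_injective _ _)]
  rw [← order_pow, orderOf_pow_of_dvd (NeZero.ne r) hσ.height_dvd_orderOf,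
    Nat.mul_div_cancel' hσ.height_dvd_orderOf]

theorem sameCycle_iff (hσ : IsTower σ τ) {k l : Fin r} {a b : α} :
    σ.SameCycle (k, a) (l, b) ↔ τ.SameCycle a b := by
  rw [← hσ.pow_apply_zero a k k.2, ← hσ.pow_apply_zero b l l.2, Perm.sameCycle_pow_left,
    Perm.sameCycle_pow_right]
  simp only [Perm.SameCycle, hσ.zpow_apply_zero_eq_zero_iff]
  exact ⟨fun ⟨_, q, _, hq⟩ ↦ ⟨q, hq⟩, fun ⟨q, hq⟩ ↦ ⟨r * q, q, rfl, hq⟩⟩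

theorem forall_sameCycle_iff (hσ : IsTower σ τ) :
    (∀ x y, σ.SameCycle x y) ↔ ∀ a b, τ.SameCycle a b := by
  simp only [Prod.forall, hσ.sameCycle_iff, forall_const]

end IsTower

section AddGroup

variable {A B : Type*} [AddGroup A] [AddGroup B]

theorem orderOf_addRight (a : A) : orderOf (Equiv.addRight a) = addOrderOf a := by
  have pow_eq_one_iff (n : ℕ) : Equiv.addRight a ^ n = 1 ↔ n • a = 0 := by
    simp [Equiv.ext_iff]
  exact Nat.dvd_right_iff_eq.1 fun n ↦ by
    rw [orderOf_dvd_iff_pow_eq_one, pow_eq_one_iff, addOrderOf_dvd_iff_nsmul_eq_zero]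

theorem sameCycle_addRight_iff {a x y : A} :
    (Equiv.addRight a).SameCycle x y ↔ -x + y ∈ zmultiples a := by
  simp [Perm.SameCycle, mem_zmultiples_iff, eq_neg_add_iff_add_eq]

theorem forall_sameCycle_addRight_iff {a : A} :
    (∀ x y, (Equiv.addRight a).SameCycle x y) ↔ zmultiples a = ⊤ := by
  simp only [sameCycle_addRight_iff, eq_top_iff']
  exact ⟨fun h x ↦ by simpa using h 0 x, fun h x y ↦ h _⟩

theorem mk_zero_mem_zmultiples_mk_iff {a : A} {b : B} :
    (a, 0) ∈ zmultiples (a, b) ↔ (addOrderOf a).Coprime (addOrderOf b) := by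
  have smul_eq_self_iff (m : ℤ) : m • a = a ↔ (addOrderOf a : ℤ) ∣ 1 - m := by
    rw [addOrderOf_dvd_iff_zsmul_eq_zero, sub_zsmul, one_zsmul, add_neg_eq_zero, eq_comm]
  simp only [mem_zmultiples_iff, Prod.smul_mk, Prod.mk.injEq, smul_eq_self_iff,
    ← addOrderOf_dvd_iff_zsmul_eq_zero, ← Nat.isCoprime_iff_coprime]
  constructor
  · rintro ⟨m, ⟨u, hu⟩, ⟨v, hv⟩⟩
    exact ⟨u, v, by linear_combination -hu - hv⟩
  · rintro ⟨u, v, huv⟩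
    exact ⟨v * addOrderOf b, ⟨u, by linear_combination -huv⟩, dvd_mul_left _ _⟩

theorem zmultiples_mk_eq_top_iff {a : A} {b : B} :
    zmultiples (a, b) = ⊤ ↔
      zmultiples a = ⊤ ∧ zmultiples b = ⊤ ∧ (addOrderOf a).Coprime (addOrderOf b) := by
  rw [← mk_zero_mem_zmultiples_mk_iff]
  constructor
  · intro h
    refine ⟨?_, ?_, h ▸ mem_top _⟩
    · calc zmultiples a = (zmultiples (a, b)).map (.fst A B) :=
          (AddMonoidHom.map_zmultiples (.fst A B) (a, b)).symm
        _ = ⊤ := h ▸ map_top_of_surjective _ Prod.fst_surjective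
    · calc zmultiples b = (zmultiples (a, b)).map (.snd A B) :=
          (AddMonoidHom.map_zmultiples (.snd A B) (a, b)).symm
        _ = ⊤ := h ▸ map_top_of_surjective _ Prod.snd_surjective
  · rintro ⟨ha, hb, left_mem⟩
    have right_mem : (0, b) ∈ zmultiples (a, b) := by
      simpa using add_mem (neg_mem left_mem) (mem_zmultiples (a, b))
    refine (eq_top_iff' _).2 fun ⟨x, y⟩ ↦ ?_
    obtain ⟨m, rfl⟩ := mem_zmultiples_iff.1 (ha ▸ mem_top x)
    obtain ⟨n, rfl⟩ := mem_zmultiples_iff.1 (hb ▸ mem_top y)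
    simpa using add_mem (zsmul_mem left_mem m) (zsmul_mem right_mem n)

theorem stmt8_general (r : ℕ) (hr : 1 ≤ r) (a : A) (b : B) (σ : Perm (Fin r × A × B))
    (hσ : ∀ (k : Fin r) (i : A) (j : B),
      (∀ h : (k : ℕ) + 1 < r, σ (k, i, j) = (⟨(k : ℕ) + 1, h⟩, i, j)) ∧
      ((k : ℕ) + 1 = r → σ (k, i, j) = (⟨0, hr⟩, i + a, j + b))) :
    orderOf σ = r * Nat.lcm (addOrderOf a) (addOrderOf b) ∧
    ((∀ x y : Fin r × A × B, ∃ m : ℤ, (σ ^ m) x = y) ↔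
      zmultiples a = ⊤ ∧ zmultiples b = ⊤ ∧ Nat.gcd (addOrderOf a) (addOrderOf b) = 1) := by
  have : NeZero r := ⟨Nat.one_le_iff_ne_zero.1 hr⟩
  have tower : IsTower σ (Equiv.addRight (a, b)) :=
    ⟨fun k x ↦ (hσ k x.1 x.2).1, fun k x ↦ (hσ k x.1 x.2).2⟩
  constructor
  · rw [tower.orderOf_eq, orderOf_addRight, Prod.addOrderOf_mk]
  · exact tower.forall_sameCycle_iff.trans <|
      forall_sameCycle_addRight_iff.trans zmultiples_mk_eq_top_iff

end AddGroup

theorem zmultiples_one_zmod (n : ℕ) : zmultiples (1 : ZMod n) = ⊤ :=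
  (eq_top_iff' _).2 fun x ↦ mem_zmultiples_iff.2 ⟨x.cast, by simp⟩

theorem stmt8 (r s t : ℕ) (hr : 1 ≤ r) (hs : 1 ≤ s) (ht : 1 ≤ t)
    (σ : Equiv.Perm (Fin r × ZMod s × ZMod t))
    (hσ : ∀ (k : Fin r) (i : ZMod s) (j : ZMod t),
      (∀ h : (k : ℕ) + 1 < r, σ (k, i, j) = (⟨(k : ℕ) + 1, h⟩, i, j)) ∧
      ((k : ℕ) + 1 = r → σ (k, i, j) = (⟨0, hr⟩, i + 1, j + 1))) :
    orderOf σ = r * Nat.lcm s t ∧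
    ((∀ x y : Fin r × ZMod s × ZMod t, ∃ m : ℤ, (σ ^ m) x = y) ↔ Nat.gcd s t = 1) := by
  simpa [ZMod.addOrderOf_one, zmultiples_one_zmod] using stmt8_general r hr 1 1 σ hσ
end

section
/- Let r ≥ 2 and s, t ≥ 1 with s·t > 1 and Nat.gcd s t = 1, and let Γ = C_{2r}[sK_1,tK_1]. Then Γ is connected, and there exists an automorphism g of Γ of order r·s·t such that the cyclic group generated by g has exactly two orbits on the vertex set, namely the two summands (ZMod r × ZMod s) and (ZMod r × ZMod t), and acts freely on the edge set of Γ with exactly two orbits; moreover, the automorphism group of Γ contains a subgroup isomorphic to the dihedral group of order 2·r·s·t that acts regularly (transitively and freely) on the edge set of Γ. -/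
/-- The graph `C_{2r}[sK_1, tK_1]`: vertex set `(ZMod r × ZMod s) ⊕ (ZMod r × ZMod t)`,
with `inl (k, i)` adjacent to `inr (k', j)` iff `k' = k` or `k' = k - 1`. -/
def blowupCycle (r s t : ℕ) : SimpleGraph ((ZMod r × ZMod s) ⊕ (ZMod r × ZMod t)) :=
  SimpleGraph.fromRel (fun v w => ∃ (k : ZMod r) (i : ZMod s) (k' : ZMod r) (j : ZMod t),
    v = Sum.inl (k, i) ∧ w = Sum.inr (k', j) ∧ (k' = k ∨ k' = k - 1))

/-!
Identify the two blocks of vertices `ZMod r × ZMod s` and `ZMod r × ZMod t` with `ZMod (r * s)` and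
`ZMod (r * t)`, so that adjacency only sees the offset `b - a ∈ {0, -1}` of the residues modulo `r`.
The rotations `x ↦ x + i` (`i : ZMod (r * s * t)`) preserve the offset and the reflections
`a ↦ -(a + i)`, `b ↦ -1 - (b + i)` exchange its two values, which are distinct as `r ≥ 2`. Since
`gcd (r * s) (r * t) = r` and `lcm (r * s) (r * t) = r * s * t`, the Chinese remainder theorem says
that the rotations act regularly on the edges of each offset; hence the dihedral group acts
regularly on all edges.
-/

section ChineseRemainder

variable {d m n N : ℕ}

theorem zmod_cast_cast (hdm : d ∣ m) (hmN : m ∣ N) (c : ZMod N) :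
    ((c.cast : ZMod m).cast : ZMod d) = c.cast :=
  DFunLike.congr_fun (ZMod.castHom_comp hdm hmN) c

theorem exists_zmod_cast_eq_and_cast_eq (hdm : d ∣ m) (hdn : d ∣ n) (hgcd : m.gcd n ∣ d)
    (hmN : m ∣ N) (hnN : n ∣ N) {a : ZMod m} {b : ZMod n}
    (hab : (a.cast : ZMod d) = b.cast) :
    ∃ c : ZMod N, c.cast = a ∧ c.cast = b := by
  obtain ⟨x, rfl⟩ := ZMod.intCast_surjective a
  obtain ⟨y, rfl⟩ := ZMod.intCast_surjective b
  rw [ZMod.cast_intCast hdm, ZMod.cast_intCast hdn, ZMod.intCast_eq_intCast_iff_dvd_sub] at hab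
  obtain ⟨k, hk⟩ : (m.gcd n : ℤ) ∣ y - x := (Int.natCast_dvd_natCast.2 hgcd).trans hab
  have hbezout : x + m * (m.gcdA n * k) = y - n * (m.gcdB n * k) := by
    linear_combination -hk - k * m.gcd_eq_gcd_ab n
  refine ⟨(x + m * (m.gcdA n * k) : ℤ), ?_, ?_⟩
  · rw [ZMod.cast_intCast hmN]
    simp
  · rw [ZMod.cast_intCast hnN, hbezout]
    simp

theorem zmod_eq_zero_of_cast_eq_zero (hmN : m ∣ N) (hnN : n ∣ N) (hlcm : N ∣ m.lcm n)
    {c : ZMod N} (hm : (c.cast : ZMod m) = 0) (hn : (c.cast : ZMod n) = 0) : c = 0 := by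
  obtain ⟨x, rfl⟩ := ZMod.intCast_surjective c
  rw [ZMod.cast_intCast hmN, ZMod.intCast_zmod_eq_zero_iff_dvd] at hm
  rw [ZMod.cast_intCast hnN, ZMod.intCast_zmod_eq_zero_iff_dvd] at hn
  rw [ZMod.intCast_zmod_eq_zero_iff_dvd]
  exact (Int.natCast_dvd_natCast.2 hlcm).trans (Int.coe_lcm_dvd hm hn)

end ChineseRemainder

section Homomorphisms

theorem map_r_one_zpow {n : ℕ} {M : Type*} [Group M] (ρ : DihedralGroup n →* M) (k : ℤ) :
    ρ (.r 1) ^ k = ρ (.r k) := by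
  rw [← map_zpow, DihedralGroup.r_one_zpow]

/-- Lift an action of a group by permutations of the vertices to one by graph automorphisms. -/
def autHomOfPermHom {G V : Type*} [Group G] {Γ : SimpleGraph V} (ρ : G →* Equiv.Perm V)
    (hρ : ∀ g v w, Γ.Adj v w → Γ.Adj (ρ g v) (ρ g w)) : G →* (Γ ≃g Γ) where
  toFun g :=
    { toEquiv := ρ g
      map_rel_iff' := ⟨fun h ↦ by simpa using hρ g⁻¹ _ _ h, hρ g _ _⟩ }
  map_one' := by
    ext v
    simp
  map_mul' g h := by
    ext v
    simp

/-- The dihedral action on an abelian group `A` in which the rotation `r i` is the translation by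
`f i`, and `sr i` is this translation followed by the reflection `x ↦ c - x`. -/
def dihedralAffine {n : ℕ} {A : Type*} [AddCommGroup A] (f : ZMod n →+ A) (c : A) :
    DihedralGroup n →* Equiv.Perm A where
  toFun
    | .r i => Equiv.addRight (f i)
    | .sr i => (Equiv.addRight (f i)).trans (Equiv.subLeft c)
  map_one' := by
    ext x
    change x + f 0 = x
    rw [map_zero, add_zero]
  map_mul' := by
    rintro (i | i) (j | j) <;> ext x <;>
      simp only [DihedralGroup.r_mul_r, DihedralGroup.r_mul_sr, DihedralGroup.sr_mul_r,
        DihedralGroup.sr_mul_sr, Equiv.Perm.mul_apply, Equiv.trans_apply, Equiv.coe_addRight,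
        Equiv.subLeft_apply, map_add, map_sub] <;>
      abel

end Homomorphisms

section RegularEdgeAction

variable {G V : Type*} [Group G] {Γ : SimpleGraph V}

/-- The action of `G` on `Γ` given by `ρ` is regular (transitive and free) on the edges of `Γ`. -/
structure ActsRegularlyOnEdges (ρ : G →* (Γ ≃g Γ)) : Prop where
  exists_map_eq : ∀ e ∈ Γ.edgeSet, ∀ e' ∈ Γ.edgeSet, ∃ g, Sym2.map (ρ g) e = e'
  eq_one_of_map_eq : ∀ e ∈ Γ.edgeSet, ∀ g, Sym2.map (ρ g) e = e → g = 1

theorem sym2_map_map_mul (ρ : G →* (Γ ≃g Γ)) (g h : G) (e : Sym2 V) :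
    Sym2.map (ρ (g * h)) e = Sym2.map (ρ g) (Sym2.map (ρ h) e) := by
  rw [Sym2.map_map, map_mul]
  rfl

namespace ActsRegularlyOnEdges

theorem injective {ρ : G →* (Γ ≃g Γ)} (hρ : ActsRegularlyOnEdges ρ) {e : Sym2 V}
    (he : e ∈ Γ.edgeSet) : Function.Injective ρ := by
  refine (injective_iff_map_eq_one ρ).2 fun g hg ↦ hρ.eq_one_of_map_eq e he g ?_
  rw [hg, RelIso.coe_one, Sym2.map_id, id]

theorem eq_of_map_eq_map {ρ : G →* (Γ ≃g Γ)} (hρ : ActsRegularlyOnEdges ρ) {e : Sym2 V}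
    (he : e ∈ Γ.edgeSet) {g h : G} (hgh : Sym2.map (ρ g) e = Sym2.map (ρ h) e) : g = h := by
  refine (inv_mul_eq_one.1 (hρ.eq_one_of_map_eq e he (h⁻¹ * g) ?_)).symm
  rw [sym2_map_map_mul, hgh, ← sym2_map_map_mul, inv_mul_cancel, map_one, RelIso.coe_one,
    Sym2.map_id, id]

variable {n : ℕ} {ρ : DihedralGroup n →* (Γ ≃g Γ)}

theorem not_exists_zpow_map_eq_reflection_map (hρ : ActsRegularlyOnEdges ρ) {e : Sym2 V}
    (he : e ∈ Γ.edgeSet) (j : ZMod n) :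
    ¬ ∃ k : ℤ, Sym2.map (ρ (.r 1) ^ k) e = Sym2.map (ρ (.sr j)) e := by
  rintro ⟨k, hk⟩
  rw [map_r_one_zpow] at hk
  cases hρ.eq_of_map_eq_map he hk

theorem exists_zpow_map_eq_or (hρ : ActsRegularlyOnEdges ρ) {e e' : Sym2 V}
    (he : e ∈ Γ.edgeSet) (he' : e' ∈ Γ.edgeSet) (j : ZMod n) :
    (∃ k : ℤ, Sym2.map (ρ (.r 1) ^ k) e = e') ∨
      ∃ k : ℤ, Sym2.map (ρ (.r 1) ^ k) (Sym2.map (ρ (.sr j)) e) = e' := by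
  simp_rw [map_r_one_zpow]
  obtain ⟨i | i, rfl⟩ := hρ.exists_map_eq e he e' he'
  · obtain ⟨k, rfl⟩ := ZMod.intCast_surjective i
    exact .inl ⟨k, rfl⟩
  · obtain ⟨k, hk⟩ := ZMod.intCast_surjective (j - i)
    refine .inr ⟨k, ?_⟩
    rw [hk, ← sym2_map_map_mul, DihedralGroup.r_mul_sr, sub_sub_cancel]

end ActsRegularlyOnEdges

end RegularEdgeAction

section Blocks

variable (m n : ℕ) [NeZero m] [NeZero n]

theorem cast_natCast_val_div_bijective :
    Function.Bijective fun x : ZMod (m * n) ↦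
      ((x.cast, (x.val / m : ℕ)) : ZMod m × ZMod n) := by
  refine (Nat.bijective_iff_injective_and_card _).2 ⟨fun x y hxy ↦ ?_, by simp⟩
  obtain ⟨hfst, hsnd⟩ := Prod.mk.inj hxy
  have hmod : x.val % m = y.val % m := by
    rwa [ZMod.cast_eq_val, ZMod.cast_eq_val, ZMod.natCast_eq_natCast_iff'] at hfst
  have hdiv : x.val / m = y.val / m := by
    have hlt (z : ZMod (m * n)) : z.val / m < n := Nat.div_lt_of_lt_mul z.val_lt
    rwa [ZMod.natCast_eq_natCast_iff', Nat.mod_eq_of_lt (hlt x), Nat.mod_eq_of_lt (hlt y)] at hsnd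
  apply ZMod.val_injective
  rw [← Nat.div_add_mod x.val m, hdiv, hmod, Nat.div_add_mod]

/-- The enumeration of `ZMod m × ZMod n` by `ZMod (m * n)`, sending `x` to its residue and its
quotient by `m`. -/
noncomputable def remQuotEquiv : ZMod (m * n) ≃ ZMod m × ZMod n :=
  Equiv.ofBijective _ (cast_natCast_val_div_bijective m n)

variable {m n}

@[simp]
theorem remQuotEquiv_fst (x : ZMod (m * n)) : (remQuotEquiv m n x).1 = x.cast :=
  rfl

variable {N : ℕ} (h : m * n ∣ N) (c : ZMod (m * n))

/-- The action `dihedralAffine` on `ZMod (m * n)`, transported to `ZMod m × ZMod n`. -/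
noncomputable def blockAction : DihedralGroup N →* Equiv.Perm (ZMod m × ZMod n) :=
  (remQuotEquiv m n).permCongrHom.toMonoidHom.comp
    (dihedralAffine (ZMod.castHom h (ZMod (m * n))).toAddMonoidHom c)

theorem blockAction_r_apply (i : ZMod N) (a : ZMod (m * n)) :
    blockAction h c (.r i) (remQuotEquiv m n a) = remQuotEquiv m n (a + i.cast) := by
  simp [blockAction, dihedralAffine]

theorem blockAction_sr_apply (i : ZMod N) (a : ZMod (m * n)) :
    blockAction h c (.sr i) (remQuotEquiv m n a) = remQuotEquiv m n (c - (a + i.cast)) := by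
  simp [blockAction, dihedralAffine]

theorem blockAction_r_fst (i : ZMod N) (p : ZMod m × ZMod n) :
    (blockAction h c (.r i) p).1 = p.1 + i.cast := by
  obtain ⟨a, rfl⟩ := (remQuotEquiv m n).surjective p
  have hm : m ∣ m * n := dvd_mul_right m n
  rw [blockAction_r_apply, remQuotEquiv_fst, remQuotEquiv_fst, ZMod.cast_add hm,
    zmod_cast_cast hm h]

theorem blockAction_sr_fst (i : ZMod N) (p : ZMod m × ZMod n) :
    (blockAction h c (.sr i) p).1 = c.cast - (p.1 + i.cast) := by
  obtain ⟨a, rfl⟩ := (remQuotEquiv m n).surjective p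
  have hm : m ∣ m * n := dvd_mul_right m n
  rw [blockAction_sr_apply, remQuotEquiv_fst, remQuotEquiv_fst, ZMod.cast_sub hm,
    ZMod.cast_add hm, zmod_cast_cast hm h]

theorem blockAction_r_surjective (p : ZMod m × ZMod n) :
    Function.Surjective fun i ↦ blockAction h c (.r i) p := by
  intro q
  obtain ⟨a, rfl⟩ := (remQuotEquiv m n).surjective p
  obtain ⟨b, rfl⟩ := (remQuotEquiv m n).surjective q
  obtain ⟨i, hi⟩ := ZMod.castHom_surjective h (b - a)
  rw [ZMod.castHom_apply] at hi
  refine ⟨i, ?_⟩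
  beta_reduce
  rw [blockAction_r_apply, hi, add_sub_cancel]

theorem cast_eq_zero_of_blockAction_r_eq {i : ZMod N} {p : ZMod m × ZMod n}
    (hp : blockAction h c (.r i) p = p) : (i.cast : ZMod (m * n)) = 0 := by
  obtain ⟨a, rfl⟩ := (remQuotEquiv m n).surjective p
  rw [blockAction_r_apply] at hp
  exact add_eq_left.1 ((remQuotEquiv m n).injective hp)

end Blocks

namespace blowupCycle

variable {r s t : ℕ}

section Adjacency

/-- The difference of the cyclic coordinates of two vertices of opposite blocks; the edges of
`blowupCycle r s t` are the pairs of offset `0` or `-1`. -/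
def offset (p : ZMod r × ZMod s) (q : ZMod r × ZMod t) : ZMod r :=
  q.1 - p.1

variable {p p' : ZMod r × ZMod s} {q q' : ZMod r × ZMod t}

theorem not_adj_inl_inl : ¬ (blowupCycle r s t).Adj (.inl p) (.inl p') := by
  simp [blowupCycle]

theorem not_adj_inr_inr : ¬ (blowupCycle r s t).Adj (.inr q) (.inr q') := by
  simp [blowupCycle]

theorem adj_inl_inr :
    (blowupCycle r s t).Adj (.inl p) (.inr q) ↔ offset p q = 0 ∨ offset p q = -1 := by
  rw [offset, sub_eq_zero, sub_eq_iff_eq_add', ← sub_eq_add_neg]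
  obtain ⟨k, i⟩ := p
  obtain ⟨k', j⟩ := q
  simp [blowupCycle]

theorem exists_of_mem_edgeSet {e : Sym2 ((ZMod r × ZMod s) ⊕ (ZMod r × ZMod t))}
    (he : e ∈ (blowupCycle r s t).edgeSet) :
    ∃ p q, (offset p q = 0 ∨ offset p q = -1) ∧ s(.inl p, .inr q) = e := by
  induction e with
  | _ v w =>
    rw [SimpleGraph.mem_edgeSet] at he
    rcases v with p | q <;> rcases w with p' | q'
    · exact absurd he not_adj_inl_inl
    · exact ⟨p, q', adj_inl_inr.1 he, rfl⟩
    · exact ⟨p', q, adj_inl_inr.1 he.symm, Sym2.eq_swap⟩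
    · exact absurd he not_adj_inr_inr

end Adjacency

section Connectedness

theorem reachable_inl_of_fst_eq (k : ZMod r) (i i' : ZMod s) :
    (blowupCycle r s t).Reachable (.inl (k, i)) (.inl (k, i')) := by
  have hadj (i : ZMod s) : (blowupCycle r s t).Adj (.inl (k, i)) (.inr (k, 0)) := by
    simp [adj_inl_inr, offset]
  exact (hadj i).reachable.trans (hadj i').symm.reachable

theorem reachable_inl_add_one (k : ZMod r) (i : ZMod s) :
    (blowupCycle r s t).Reachable (.inl (k, i)) (.inl (k + 1, i)) := by
  have hk : (blowupCycle r s t).Adj (.inl (k, i)) (.inr (k, 0)) := by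
    simp [adj_inl_inr, offset]
  have hk' : (blowupCycle r s t).Adj (.inl (k + 1, i)) (.inr (k, 0)) := by
    simp [adj_inl_inr, offset]
  exact hk.reachable.trans hk'.symm.reachable

theorem reachable_zero_inl (k : ZMod r) (i : ZMod s) :
    (blowupCycle r s t).Reachable (.inl (0, i)) (.inl (k, i)) := by
  obtain ⟨x, rfl⟩ := ZMod.intCast_surjective k
  induction x with
  | zero => simp
  | succ x ih => simpa using ih.trans (reachable_inl_add_one _ i)
  | pred x ih =>
    have hstep : (blowupCycle r s t).Reachable (.inl (-x, i)) (.inl (-x - 1, i)) := by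
      simpa using (reachable_inl_add_one (-x - 1 : ZMod r) i).symm
    simpa using ih.trans (by simpa using hstep)

variable (r s t) in
protected theorem connected : (blowupCycle r s t).Connected := by
  refine (SimpleGraph.connected_iff_exists_forall_reachable _).2 ⟨.inl (0, 0), ?_⟩
  have hinl (k : ZMod r) (i : ZMod s) :
      (blowupCycle r s t).Reachable (.inl (0, 0)) (.inl (k, i)) :=
    (reachable_zero_inl k 0).trans (reachable_inl_of_fst_eq k 0 i)
  rintro (⟨k, i⟩ | ⟨k, j⟩)
  · exact hinl k i
  · have hadj : (blowupCycle r s t).Adj (.inl (k, 0)) (.inr (k, j)) := by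
      simp [adj_inl_inr, offset]
    exact (hinl k 0).trans hadj.reachable

end Connectedness

section DihedralAction

variable (r s t) in
/-- The action on the block `ZMod r × ZMod s`, which on `ZMod (r * s)` is by the rotations
`a ↦ a + i` and the reflections `a ↦ -(a + i)`. -/
noncomputable def leftAction [NeZero r] [NeZero s] :
    DihedralGroup (r * s * t) →* Equiv.Perm (ZMod r × ZMod s) :=
  blockAction (dvd_mul_right (r * s) t) 0

variable (r s t) in
/-- The action on the block `ZMod r × ZMod t`, which on `ZMod (r * t)` is by the rotations
`b ↦ b + i` and the reflections `b ↦ -1 - (b + i)`. -/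
noncomputable def rightAction [NeZero r] [NeZero t] :
    DihedralGroup (r * s * t) →* Equiv.Perm (ZMod r × ZMod t) :=
  blockAction (mul_dvd_mul_right (dvd_mul_right r s) t) (-1)

variable [NeZero r] [NeZero s] [NeZero t]

theorem offset_rotation (i : ZMod (r * s * t)) (p : ZMod r × ZMod s) (q : ZMod r × ZMod t) :
    offset (leftAction r s t (.r i) p) (rightAction r s t (.r i) q) = offset p q := by
  rw [offset, offset, rightAction, leftAction, blockAction_r_fst, blockAction_r_fst,
    add_sub_add_right_eq_sub]

theorem offset_reflection (i : ZMod (r * s * t)) (p : ZMod r × ZMod s) (q : ZMod r × ZMod t) :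
    offset (leftAction r s t (.sr i) p) (rightAction r s t (.sr i) q) = -1 - offset p q := by
  have hcast : ((-1 : ZMod (r * t)).cast : ZMod r) = -1 := by
    rw [ZMod.cast_neg (dvd_mul_right r t), ZMod.cast_one (dvd_mul_right r t)]
  rw [offset, offset, rightAction, leftAction, blockAction_sr_fst, blockAction_sr_fst, hcast,
    ZMod.cast_zero]
  ring

theorem adj_leftAction_rightAction (g : DihedralGroup (r * s * t)) {p : ZMod r × ZMod s}
    {q : ZMod r × ZMod t} (h : (blowupCycle r s t).Adj (.inl p) (.inr q)) :
    (blowupCycle r s t).Adj (.inl (leftAction r s t g p)) (.inr (rightAction r s t g q)) := by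
  rw [adj_inl_inr] at h ⊢
  rcases g with i | i
  · rwa [offset_rotation]
  · rw [offset_reflection]
    rcases h with h | h <;> simp [h]

variable (r s t) in
/-- The dihedral group of order `2rst` acting on `blowupCycle r s t` by automorphisms. -/
noncomputable def dihedralAut :
    DihedralGroup (r * s * t) →* (blowupCycle r s t ≃g blowupCycle r s t) :=
  autHomOfPermHom ((Equiv.Perm.sumCongrHom _ _).comp
    ((leftAction r s t).prod (rightAction r s t))) <| by
    rintro g (p | q) (p' | q') h
    · exact absurd h not_adj_inl_inl
    · exact adj_leftAction_rightAction g h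
    · exact (adj_leftAction_rightAction g h.symm).symm
    · exact absurd h not_adj_inr_inr

theorem dihedralAut_inl (g : DihedralGroup (r * s * t)) (p : ZMod r × ZMod s) :
    dihedralAut r s t g (.inl p) = .inl (leftAction r s t g p) :=
  rfl

theorem dihedralAut_inr (g : DihedralGroup (r * s * t)) (q : ZMod r × ZMod t) :
    dihedralAut r s t g (.inr q) = .inr (rightAction r s t g q) :=
  rfl

theorem dihedralAut_map_edge (g : DihedralGroup (r * s * t)) (p : ZMod r × ZMod s)
    (q : ZMod r × ZMod t) :
    Sym2.map (dihedralAut r s t g) s(.inl p, .inr q) =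
      s(.inl (leftAction r s t g p), .inr (rightAction r s t g q)) :=
  rfl

theorem setOf_exists_zpow_inl (p : ZMod r × ZMod s) :
    {w | ∃ k : ℤ, (dihedralAut r s t (.r 1) ^ k) (.inl p) = w} = Set.range Sum.inl := by
  simp_rw [map_r_one_zpow, dihedralAut_inl]
  exact ((blockAction_r_surjective _ _ p).comp
    ZMod.intCast_surjective).range_comp Sum.inl

theorem setOf_exists_zpow_inr (q : ZMod r × ZMod t) :
    {w | ∃ k : ℤ, (dihedralAut r s t (.r 1) ^ k) (.inr q) = w} = Set.range Sum.inr := by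
  simp_rw [map_r_one_zpow, dihedralAut_inr]
  exact ((blockAction_r_surjective _ _ q).comp
    ZMod.intCast_surjective).range_comp Sum.inr

theorem exists_rotation_of_offset_eq (hst : s.Coprime t) {p p' : ZMod r × ZMod s}
    {q q' : ZMod r × ZMod t} (hoffset : offset p q = offset p' q') :
    ∃ i, leftAction r s t (.r i) p = p' ∧ rightAction r s t (.r i) q = q' := by
  obtain ⟨a, rfl⟩ := (remQuotEquiv r s).surjective p
  obtain ⟨a', rfl⟩ := (remQuotEquiv r s).surjective p'
  obtain ⟨b, rfl⟩ := (remQuotEquiv r t).surjective q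
  obtain ⟨b', rfl⟩ := (remQuotEquiv r t).surjective q'
  have hgcd : (r * s).gcd (r * t) ∣ r := by rw [Nat.gcd_mul_left, hst.gcd_eq_one, mul_one]
  have hcast : ((a' - a).cast : ZMod r) = (b' - b).cast := by
    rw [ZMod.cast_sub (dvd_mul_right r s), ZMod.cast_sub (dvd_mul_right r t)]
    simp only [offset, remQuotEquiv_fst] at hoffset
    linear_combination hoffset
  obtain ⟨i, hleft, hright⟩ := exists_zmod_cast_eq_and_cast_eq (dvd_mul_right r s)
    (dvd_mul_right r t) hgcd (dvd_mul_right (r * s) t)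
    (mul_dvd_mul_right (dvd_mul_right r s) t) hcast
  refine ⟨i, ?_, ?_⟩
  · rw [leftAction, blockAction_r_apply, hleft, add_sub_cancel]
  · rw [rightAction, blockAction_r_apply, hright, add_sub_cancel]

theorem exists_dihedralAut_map_eq (hst : s.Coprime t)
    {e e' : Sym2 ((ZMod r × ZMod s) ⊕ (ZMod r × ZMod t))}
    (he : e ∈ (blowupCycle r s t).edgeSet) (he' : e' ∈ (blowupCycle r s t).edgeSet) :
    ∃ g, Sym2.map (dihedralAut r s t g) e = e' := by
  obtain ⟨p, q, hpq, rfl⟩ := exists_of_mem_edgeSet he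
  obtain ⟨p', q', hpq', rfl⟩ := exists_of_mem_edgeSet he'
  suffices ∃ g, leftAction r s t g p = p' ∧ rightAction r s t g q = q' by
    obtain ⟨g, rfl, rfl⟩ := this
    exact ⟨g, dihedralAut_map_edge g p q⟩
  by_cases hoffset : offset p q = offset p' q'
  · obtain ⟨i, hi⟩ := exists_rotation_of_offset_eq hst hoffset
    exact ⟨.r i, hi⟩
  · have hreflected :
        offset (leftAction r s t (.sr 0) p) (rightAction r s t (.sr 0) q) = offset p' q' := by
      rw [offset_reflection]
      rcases hpq with h | h <;> rcases hpq' with h' | h' <;> simp_all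
    obtain ⟨i, hp, hq⟩ := exists_rotation_of_offset_eq hst hreflected
    refine ⟨.r i * .sr 0, ?_, ?_⟩
    · rw [map_mul, Equiv.Perm.mul_apply, hp]
    · rw [map_mul, Equiv.Perm.mul_apply, hq]

theorem eq_one_of_dihedralAut_map_eq (hr : 1 < r) (hst : s.Coprime t)
    {e : Sym2 ((ZMod r × ZMod s) ⊕ (ZMod r × ZMod t))} (he : e ∈ (blowupCycle r s t).edgeSet)
    {g : DihedralGroup (r * s * t)} (hg : Sym2.map (dihedralAut r s t g) e = e) : g = 1 := by
  obtain ⟨p, q, hpq, rfl⟩ := exists_of_mem_edgeSet he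
  obtain ⟨hp, hq⟩ : leftAction r s t g p = p ∧ rightAction r s t g q = q := by
    simpa [dihedralAut_inl, dihedralAut_inr] using hg
  rcases g with i | i
  · have hlcm : r * s * t ∣ (r * s).lcm (r * t) := by
      rw [Nat.lcm_mul_left, hst.lcm_eq_mul, mul_assoc]
    rw [DihedralGroup.one_def, zmod_eq_zero_of_cast_eq_zero (dvd_mul_right (r * s) t)
      (mul_dvd_mul_right (dvd_mul_right r s) t) hlcm
      (cast_eq_zero_of_blockAction_r_eq _ _ hp) (cast_eq_zero_of_blockAction_r_eq _ _ hq)]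
  · have : Fact (1 < r) := ⟨hr⟩
    have hoffset := offset_reflection i p q
    rw [hp, hq] at hoffset
    rcases hpq with h | h <;> simp [h] at hoffset

theorem dihedralAut_actsRegularlyOnEdges (hr : 1 < r) (hst : s.Coprime t) :
    ActsRegularlyOnEdges (dihedralAut r s t) where
  exists_map_eq _ he _ he' := exists_dihedralAut_map_eq hst he he'
  eq_one_of_map_eq _ he _ := eq_one_of_dihedralAut_map_eq hr hst he

end DihedralAction

end blowupCycle

theorem stmt9 (r s t : ℕ) (hr : 2 ≤ r) (hs : 1 ≤ s) (ht : 1 ≤ t) (hst : 1 < s * t)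
    (hgcd : Nat.gcd s t = 1) :
    (blowupCycle r s t).Connected ∧
    (∃ g : blowupCycle r s t ≃g blowupCycle r s t,
      orderOf g = r * s * t ∧
      -- the vertex orbits of `⟨g⟩` are exactly the two summands
      (∀ v : ZMod r × ZMod s,
        {w : (ZMod r × ZMod s) ⊕ (ZMod r × ZMod t) | ∃ k : ℤ, (g ^ k) (Sum.inl v) = w} =
          Set.range Sum.inl) ∧
      (∀ v : ZMod r × ZMod t,
        {w : (ZMod r × ZMod s) ⊕ (ZMod r × ZMod t) | ∃ k : ℤ, (g ^ k) (Sum.inr v) = w} =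
          Set.range Sum.inr) ∧
      -- `⟨g⟩` acts freely on the edge set
      (∀ k : ℤ, ∀ e ∈ (blowupCycle r s t).edgeSet, Sym2.map ⇑(g ^ k) e = e → g ^ k = 1) ∧
      -- with exactly two orbits
      (∃ e₁ ∈ (blowupCycle r s t).edgeSet, ∃ e₂ ∈ (blowupCycle r s t).edgeSet,
        ¬ (∃ k : ℤ, Sym2.map ⇑(g ^ k) e₁ = e₂) ∧
        ∀ e ∈ (blowupCycle r s t).edgeSet,
          (∃ k : ℤ, Sym2.map ⇑(g ^ k) e₁ = e) ∨ (∃ k : ℤ, Sym2.map ⇑(g ^ k) e₂ = e))) ∧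
    -- a dihedral subgroup of order `2rst` acting regularly on the edge set
    (∃ H : Subgroup (blowupCycle r s t ≃g blowupCycle r s t),
      Nonempty (H ≃* DihedralGroup (r * s * t)) ∧
      (∀ e ∈ (blowupCycle r s t).edgeSet, ∀ e' ∈ (blowupCycle r s t).edgeSet,
        ∃ h ∈ H, Sym2.map ⇑h e = e') ∧
      (∀ h ∈ H, (∃ e ∈ (blowupCycle r s t).edgeSet, Sym2.map ⇑h e = e) → h = 1)) := by
  have : NeZero r := ⟨by lia⟩
  have : NeZero s := ⟨by lia⟩
  have : NeZero t := ⟨by lia⟩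
  set ρ := blowupCycle.dihedralAut r s t
  have hρ : ActsRegularlyOnEdges ρ := blowupCycle.dihedralAut_actsRegularlyOnEdges hr hgcd
  have he : s(.inl 0, .inr 0) ∈ (blowupCycle r s t).edgeSet :=
    blowupCycle.adj_inl_inr.2 (by simp [blowupCycle.offset])
  have hinj : Function.Injective ρ := hρ.injective he
  refine ⟨blowupCycle.connected r s t,
    ⟨ρ (.r 1), ?_, blowupCycle.setOf_exists_zpow_inl, blowupCycle.setOf_exists_zpow_inr,
      fun k e he hk ↦ ?_, s(.inl 0, .inr 0), he, Sym2.map (ρ (.sr 0)) s(.inl 0, .inr 0),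
      (SimpleGraph.Iso.map_mem_edgeSet_iff _).2 he,
      hρ.not_exists_zpow_map_eq_reflection_map he 0,
      fun e' he' ↦ hρ.exists_zpow_map_eq_or he he' 0⟩,
    ρ.range, ⟨(MonoidHom.ofInjective hinj).symm⟩, fun e he e' he' ↦ ?_, ?_⟩
  · rw [orderOf_injective ρ hinj, DihedralGroup.orderOf_r_one]
  · rw [← map_zpow] at hk ⊢
    rw [hρ.eq_one_of_map_eq e he _ hk, map_one]
  · obtain ⟨g, hg⟩ := hρ.exists_map_eq e he e' he'
    exact ⟨ρ g, ⟨g, rfl⟩, hg⟩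
  · rintro _ ⟨g, rfl⟩ ⟨e, he, hg⟩
    rw [hρ.eq_one_of_map_eq e he g hg, map_one]
end

section
/- Let G be a group with subgroups L and R, and let Γ be the simple graph on the disjoint union (G⧸L) ⊕ (G⧸R) of the coset spaces in which inl x is adjacent to inr y if and only if there exists g ∈ G with x = gL and y = gR (i.e., the cosets xL and yR intersect), and there are no other adjacencies. Then: (1) Γ is connected if and only if the subgroup of G generated by L ∪ R is all of G; and (2) every vertex inl x is adjacent to every vertex inr y if and only if {l·r | l ∈ L, r ∈ R} = G. -/
/-- The (simple) bi-coset graph `BiCos(G, L, R, L ∩ R)` on the disjoint union of the coset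
spaces `G ⧸ L` and `G ⧸ R`: `inl x` is adjacent to `inr y` iff `x = gL` and `y = gR` for
some `g ∈ G`, and there are no other adjacencies. -/
def biCosetGraph (G : Type*) [Group G] (L R : Subgroup G) :
    SimpleGraph ((G ⧸ L) ⊕ (G ⧸ R)) :=
  SimpleGraph.fromRel (fun v w => ∃ g : G,
    v = Sum.inl (QuotientGroup.mk g : G ⧸ L) ∧ w = Sum.inr (QuotientGroup.mk g : G ⧸ R))

/-!
Crossing an edge of the graph never leaves a coset of `L ⊔ R`, while right multiplication by an
element of `L` or `R` moves from `gL` to a vertex at distance at most two. Hence the connected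
components are exactly the fibres of the map to `G ⧸ (L ⊔ R)`. For completeness, `a * l = b * r`
rearranges to `a⁻¹ * b = l * r⁻¹`, so the cosets `aL` and `bR` meet exactly when `a⁻¹ * b ∈ L * R`,
and `a⁻¹ * b` ranges over all of `G`.
-/

namespace biCosetGraph

open scoped Pointwise

variable {G : Type*} [Group G] {L R : Subgroup G}

theorem adj_inl_inr_iff {x : G ⧸ L} {y : G ⧸ R} :
    (biCosetGraph G L R).Adj (Sum.inl x) (Sum.inr y) ↔
      ∃ g : G, x = QuotientGroup.mk g ∧ y = QuotientGroup.mk g := by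
  simp [biCosetGraph]

theorem adj_inl_mk_inr_mk (g : G) :
    (biCosetGraph G L R).Adj (Sum.inl (QuotientGroup.mk g)) (Sum.inr (QuotientGroup.mk g)) :=
  adj_inl_inr_iff.2 ⟨g, rfl, rfl⟩

theorem adj_inl_mk_inr_mk_iff {a b : G} :
    (biCosetGraph G L R).Adj (Sum.inl (QuotientGroup.mk a)) (Sum.inr (QuotientGroup.mk b)) ↔
      a⁻¹ * b ∈ (L : Set G) * (R : Set G) := by
  simp only [adj_inl_inr_iff, QuotientGroup.eq, Set.mem_mul, SetLike.mem_coe]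
  constructor
  · rintro ⟨g, hag, hbg⟩
    exact ⟨a⁻¹ * g, hag, (b⁻¹ * g)⁻¹, R.inv_mem hbg, by group⟩
  · rintro ⟨l, hl, r, hr, hlr⟩
    obtain rfl : b = a * l * r := by rw [mul_assoc, hlr, mul_inv_cancel_left]
    exact ⟨a * l, by simpa using hl, by simpa [mul_assoc] using hr⟩

theorem forall_adj_inl_inr_iff :
    (∀ (x : G ⧸ L) (y : G ⧸ R), (biCosetGraph G L R).Adj (Sum.inl x) (Sum.inr y)) ↔
      (L : Set G) * (R : Set G) = Set.univ := by
  simp only [QuotientGroup.forall_mk, adj_inl_mk_inr_mk_iff, Set.eq_univ_iff_forall]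
  exact ⟨fun h g => by simpa using h 1 g, fun h a b => h (a⁻¹ * b)⟩

/-- The coset of `L ⊔ R` containing a given coset of `L` or of `R`; it labels the connected
component of a vertex. -/
def supCoset (L R : Subgroup G) : (G ⧸ L) ⊕ (G ⧸ R) → G ⧸ (L ⊔ R) :=
  Sum.elim (Subgroup.quotientMapOfLE le_sup_left) (Subgroup.quotientMapOfLE le_sup_right)

theorem supCoset_inl_mk (g : G) :
    supCoset L R (Sum.inl (QuotientGroup.mk g)) = QuotientGroup.mk g :=
  rfl

theorem supCoset_eq_of_adj {v w : (G ⧸ L) ⊕ (G ⧸ R)} (h : (biCosetGraph G L R).Adj v w) :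
    supCoset L R v = supCoset L R w := by
  obtain ⟨-, ⟨g, rfl, rfl⟩ | ⟨g, rfl, rfl⟩⟩ := (SimpleGraph.fromRel_adj _ _ _).1 h <;> rfl

theorem supCoset_eq_of_reachable {v w : (G ⧸ L) ⊕ (G ⧸ R)}
    (h : (biCosetGraph G L R).Reachable v w) : supCoset L R v = supCoset L R w := by
  obtain ⟨p⟩ := h
  induction p with
  | nil => rfl
  | cons hadj _ ih => exact (supCoset_eq_of_adj hadj).trans ih

theorem reachable_inl_mk_mul {h : G} (hh : h ∈ L ⊔ R) (g : G) :
    (biCosetGraph G L R).Reachable (Sum.inl (QuotientGroup.mk g))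
      (Sum.inl (QuotientGroup.mk (g * h))) := by
  rw [Subgroup.sup_eq_closure] at hh
  induction hh using Subgroup.closure_induction generalizing g with
  | mem x hx =>
    rcases hx with hxL | hxR
    · rw [QuotientGroup.mk_mul_of_mem g hxL]
    · have hadj := adj_inl_mk_inr_mk (L := L) (R := R) (g * x)
      rw [QuotientGroup.mk_mul_of_mem (s := R) g hxR] at hadj
      exact (adj_inl_mk_inr_mk g).reachable.trans hadj.symm.reachable
  | one => rw [mul_one]
  | mul x y _ _ ihx ihy =>
    rw [← mul_assoc]
    exact (ihx g).trans (ihy (g * x))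
  | inv x _ ihx => simpa using (ihx (g * x⁻¹)).symm

theorem exists_reachable_inl_mk (v : (G ⧸ L) ⊕ (G ⧸ R)) :
    ∃ g : G, (biCosetGraph G L R).Reachable v (Sum.inl (QuotientGroup.mk g)) := by
  rcases v with ⟨⟨g⟩⟩ | ⟨⟨g⟩⟩
  · exact ⟨g, .rfl⟩
  · exact ⟨g, (adj_inl_mk_inr_mk g).symm.reachable⟩

theorem reachable_iff {v w : (G ⧸ L) ⊕ (G ⧸ R)} :
    (biCosetGraph G L R).Reachable v w ↔ supCoset L R v = supCoset L R w := by
  refine ⟨supCoset_eq_of_reachable, fun hvw => ?_⟩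
  obtain ⟨a, hva⟩ := exists_reachable_inl_mk v
  obtain ⟨b, hwb⟩ := exists_reachable_inl_mk w
  rw [supCoset_eq_of_reachable hva, supCoset_eq_of_reachable hwb, supCoset_inl_mk,
    supCoset_inl_mk, QuotientGroup.eq] at hvw
  have hab := reachable_inl_mk_mul hvw a
  rw [mul_inv_cancel_left] at hab
  exact hva.trans (hab.trans hwb.symm)

theorem connected_iff : (biCosetGraph G L R).Connected ↔ L ⊔ R = ⊤ := by
  constructor
  · intro hconn
    refine (Subgroup.eq_top_iff' _).2 fun g => ?_
    have hg := reachable_iff.1 (hconn (Sum.inl (QuotientGroup.mk 1)) (Sum.inl (QuotientGroup.mk g)))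
    simpa only [supCoset_inl_mk, QuotientGroup.eq, inv_one, one_mul] using hg
  · intro htop
    have : Subsingleton (G ⧸ (L ⊔ R)) := htop ▸ QuotientGroup.subsingleton_quotient_top
    exact ⟨fun _ _ => reachable_iff.2 (Subsingleton.elim _ _)⟩

end biCosetGraph

theorem stmt13 (G : Type*) [Group G] (L R : Subgroup G) :
    ((biCosetGraph G L R).Connected ↔ Subgroup.closure ((L : Set G) ∪ (R : Set G)) = ⊤) ∧
    ((∀ (x : G ⧸ L) (y : G ⧸ R), (biCosetGraph G L R).Adj (Sum.inl x) (Sum.inr y)) ↔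
      ∀ g : G, ∃ l ∈ L, ∃ r ∈ R, g = l * r) := by
  rw [← Subgroup.sup_eq_closure]
  refine ⟨biCosetGraph.connected_iff, biCosetGraph.forall_adj_inl_inr_iff.trans ?_⟩
  simp only [Set.eq_univ_iff_forall, Set.mem_mul, SetLike.mem_coe, eq_comm (b := _ * _)]
end
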